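/- arXiv:1810.10103 — 5 statements merged into one kernel-verified Lean document; each statement's English description precedes it below -/
import Mathlib

section
/- Assume Re λ_j ≠ 0 for every j = 1,…,2n, and let F(t) = Σ_{κ∈ℤ^k} F_κ e^{i⟨κ,Ω⟩t} with coefficients F_κ ∈ ℂ^{2n} satisfying Σ_{κ∈ℤ^k} |F_κ| < ∞ and F real-valued. Then the series z(t) := V Σ_{κ∈ℤ^k} H(T_κ) (B V)^{−1} F_κ e^{i⟨κ,Ω⟩t} converges absolutely and uniformly on ℝ, the function z is continuously differentiable, solves the linear system B ż = A z + F(t) on ℝ, and is the unique solution of this system that is bounded on all of ℝ. -/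
/-!
With `W = B V` and `c κ = V H(T_κ) W⁻¹ F_κ`, the factors `|1 / (i⟨κ,Ω⟩ - λ_j)|` are at most
`1 / |Re λ_j|` uniformly in `κ`, so `‖c κ‖` is summable and the Weierstrass M-test gives
absolute and uniform convergence. The eigenvalue relation `A V = B V Λ` yields
`B (i⟨κ,Ω⟩ c κ) = A (c κ) + F_κ` (`modal_identity`); hence `i⟨κ,Ω⟩ c κ = B⁻¹ (A (c κ) + F_κ)` is
summable as well, the series may be differentiated termwise, and its sum solves the system.

For uniqueness, the difference of two bounded solutions, read in the coordinates given by the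
columns of `V`, decouples into bounded solutions of `y' = λ_j y` on all of `ℝ`, and these vanish
because `Re λ_j ≠ 0` (`eq_zero_of_bounded_exp`).
-/

/-- The pairing `⟨κ, Ω⟩ = Σ_i κ_i Ω_i` between an integer multi-index and a frequency basis. -/
noncomputable def kdot {k : ℕ} (κ : Fin k → ℤ) (Ω : Fin k → ℝ) : ℝ :=
  ∑ i, (κ i : ℝ) * Ω i

open Matrix

theorem summable_norm_mulVec {ι : Type*} {m : ℕ} (M : Matrix (Fin m) (Fin m) ℂ)
    {f : ι → Fin m → ℂ} (hf : Summable fun x => ‖f x‖) : Summable fun x => ‖M *ᵥ f x‖ := by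
  refine Summable.of_nonneg_of_le (fun _ => norm_nonneg _) (fun x => ?_)
    (hf.mul_left ‖(Matrix.mulVecLin M).toContinuousLinearMap‖)
  exact (Matrix.mulVecLin M).toContinuousLinearMap.le_opNorm (f x)

theorem summable_norm_diagonal {ι : Type*} {m : ℕ} (ω : ι → ℝ) (Λ : Fin m → ℂ)
    (hRe : ∀ j, (Λ j).re ≠ 0)
    {f : ι → Fin m → ℂ} (hf : Summable fun x => ‖f x‖) :
    Summable fun x =>
      ‖(Matrix.diagonal fun j => 1 / (Complex.I * (ω x) - Λ j)) *ᵥ f x‖ := by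
  refine Summable.of_nonneg_of_le (fun _ => norm_nonneg _) (fun x => ?_)
    (hf.mul_left (∑ j, 1 / |(Λ j).re|))
  have h0 : 0 ≤ ∑ j, 1 / |(Λ j).re| := Finset.sum_nonneg fun j _ => by positivity
  rw [pi_norm_le_iff_of_nonneg (by positivity)]
  intro j
  rw [Matrix.mulVec_diagonal, norm_mul]
  refine mul_le_mul ?_ (norm_le_pi_norm _ j) (norm_nonneg _) h0
  refine le_trans ?_ (Finset.single_le_sum (f := fun j => 1 / |(Λ j).re|)
    (fun j _ => by positivity) (Finset.mem_univ j))
  rw [norm_div, norm_one]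
  refine one_div_le_one_div_of_le (abs_pos.2 (hRe j)) ?_
  have := Complex.abs_re_le_norm (Complex.I * (ω x) - Λ j)
  simpa using this

/-- The mode `c = V (iω - Λ)⁻¹ (B V)⁻¹ f` is the response to the forcing mode `f e^{iωt}`. -/
theorem modal_identity {m : ℕ} (A B V : Matrix (Fin m) (Fin m) ℂ) (hBV : IsUnit (B * V))
    (Λ : Fin m → ℂ) (hgev : A * V = B * V * Matrix.diagonal Λ) (s : ℂ)
    (hs : ∀ j, s - Λ j ≠ 0) (f : Fin m → ℂ) :
    B *ᵥ (s • (V *ᵥ ((Matrix.diagonal fun j => 1 / (s - Λ j)) *ᵥ ((B * V)⁻¹ *ᵥ f)))) =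
      A *ᵥ (V *ᵥ ((Matrix.diagonal fun j => 1 / (s - Λ j)) *ᵥ ((B * V)⁻¹ *ᵥ f))) + f := by
  set g := (B * V)⁻¹ *ᵥ f with hg
  have hf : f = (B * V) *ᵥ g := by
    rw [hg, Matrix.mulVec_mulVec,
      Matrix.mul_nonsing_inv _ ((Matrix.isUnit_iff_isUnit_det _).1 hBV), Matrix.one_mulVec]
  rw [hf, Matrix.mulVec_smul, Matrix.mulVec_mulVec, Matrix.mulVec_mulVec _ A V, hgev,
    ← Matrix.mulVec_mulVec _ (B * V) (Matrix.diagonal Λ), ← Matrix.mulVec_smul, ← Matrix.mulVec_add]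
  congr 1
  ext j
  simp only [Matrix.mulVec_diagonal, Pi.smul_apply, Pi.add_apply, smul_eq_mul]
  have := hs j
  field_simp
  ring

theorem eq_zero_of_bounded_exp (l : ℂ) (hl : l.re ≠ 0) (y : ℝ → ℂ)
    (hy : ∀ t, HasDerivAt y (l * y t) t) (M : ℝ) (hM : ∀ t, ‖y t‖ ≤ M) (t : ℝ) : y t = 0 := by
  have hd : ∀ t : ℝ, HasDerivAt (fun t : ℝ => Complex.exp (-l * t) * y t) 0 t := by
    intro t
    have h1 : HasDerivAt (fun t : ℝ => -l * (t : ℂ)) (-l) t := by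
      simpa using (Complex.ofRealCLM.hasDerivAt (x := t)).const_mul (-l)
    refine (h1.cexp.mul (hy t)).congr_deriv ?_
    ring
  have hconst := is_const_of_deriv_eq_zero (fun t => (hd t).differentiableAt)
    (fun t => (hd t).deriv)
  have hbound : ∀ r : ℝ, ‖Complex.exp (-l * t) * y t‖ ≤ Real.exp (-r) * M := by
    intro r
    -- Moving to the time `r / Re l` makes the factor `exp (-l t)` have modulus `exp (-r)`.
    have h := hconst t (r / l.re)
    rw [show Complex.exp (-l * t) * y t = _ from h, norm_mul, Complex.norm_exp]
    have hr : (-l * ((r / l.re : ℝ) : ℂ)).re = -r := by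
      rw [Complex.re_mul_ofReal, Complex.neg_re]
      field_simp
    rw [hr]
    exact mul_le_mul_of_nonneg_left (hM _) (Real.exp_pos _).le
  have hlim : Filter.Tendsto (fun r : ℝ => Real.exp (-r) * M) Filter.atTop (nhds 0) := by
    simpa using Real.tendsto_exp_neg_atTop_nhds_zero.mul_const M
  have h0 := ge_of_tendsto' hlim hbound
  have h1 : Complex.exp (-l * t) * y t = 0 := norm_le_zero_iff.1 h0
  exact (mul_eq_zero.1 h1).resolve_left (Complex.exp_ne_zero _)

theorem hasDerivAt_mulVec {m : ℕ} (M : Matrix (Fin m) (Fin m) ℂ) {w : ℝ → Fin m → ℂ}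
    {w' : Fin m → ℂ} {t : ℝ} (hw : HasDerivAt w w' t) :
    HasDerivAt (fun t => M *ᵥ w t) (M *ᵥ w') t :=
  ((Matrix.mulVecLin M).toContinuousLinearMap.restrictScalars ℝ).hasFDerivAt.comp_hasDerivAt t hw

theorem mulVec_tsum {ι : Type*} {m : ℕ} (M : Matrix (Fin m) (Fin m) ℂ)
    {f : ι → Fin m → ℂ} (hf : Summable f) : M *ᵥ (∑' x, f x) = ∑' x, M *ᵥ f x :=
  (Matrix.mulVecLin M).toContinuousLinearMap.map_tsum hf

/-- The homogeneous system `B ẇ = A w` has no nonzero solution bounded on all of `ℝ`. -/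
theorem homogeneous_eq_zero {m : ℕ} (A B V : Matrix (Fin m) (Fin m) ℂ) (hV : IsUnit V)
    (hBV : IsUnit (B * V))
    (Λ : Fin m → ℂ) (hgev : A * V = B * V * Matrix.diagonal Λ) (hRe : ∀ j, (Λ j).re ≠ 0)
    (w w' : ℝ → Fin m → ℂ) (hw : ∀ t, HasDerivAt w (w' t) t)
    (heq : ∀ t, B *ᵥ w' t = A *ᵥ w t) (M : ℝ) (hM : ∀ t, ‖w t‖ ≤ M) (t : ℝ) : w t = 0 := by
  have hVd := (Matrix.isUnit_iff_isUnit_det _).1 hV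
  have hVV : ∀ x, V *ᵥ (V⁻¹ *ᵥ x) = x := fun x => by
    rw [Matrix.mulVec_mulVec, Matrix.mul_nonsing_inv _ hVd, Matrix.one_mulVec]
  have hinj : Function.Injective (B * V).mulVec := Matrix.mulVec_injective_of_isUnit hBV
  have hy : ∀ t, V⁻¹ *ᵥ w' t = Matrix.diagonal Λ *ᵥ (V⁻¹ *ᵥ w t) := by
    intro t
    apply hinj
    rw [← Matrix.mulVec_mulVec, hVV, heq, Matrix.mulVec_mulVec _ (B * V), ← hgev,
      ← Matrix.mulVec_mulVec, hVV]
  have hz : V⁻¹ *ᵥ w t = 0 := by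
    ext j
    refine eq_zero_of_bounded_exp (Λ j) (hRe j) (fun t => (V⁻¹ *ᵥ w t) j) (fun t => ?_)
      (‖(Matrix.mulVecLin V⁻¹).toContinuousLinearMap‖ * M) (fun t => ?_) t
    · have h := hasDerivAt_pi.1 (hasDerivAt_mulVec V⁻¹ (hw t)) j
      rw [hy t, Matrix.mulVec_diagonal] at h
      exact h
    · refine (norm_le_pi_norm _ j).trans ?_
      refine ((Matrix.mulVecLin V⁻¹).toContinuousLinearMap.le_opNorm (w t)).trans ?_
      exact mul_le_mul_of_nonneg_left (hM t) (norm_nonneg _)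
  rw [← hVV (w t), hz, Matrix.mulVec_zero]

/-- with `Re λ_j ≠ 0` for all `j` and quasi-periodic forcing
`F(t) = Σ_κ F_κ e^{i⟨κ,Ω⟩t}` with absolutely summable coefficients, the series
`z(t) = V Σ_κ H(T_κ)(BV)⁻¹ F_κ e^{i⟨κ,Ω⟩t}` converges absolutely and uniformly on `ℝ`,
`z` is `C¹`, solves `B ż = A z + F(t)`, and is the unique solution bounded on all of `ℝ`. -/
theorem stmt_7 {n k : ℕ} (A B : Matrix (Fin (2*n)) (Fin (2*n)) ℝ) (hB : IsUnit B)
    (V : Matrix (Fin (2*n)) (Fin (2*n)) ℂ) (hV : IsUnit V)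
    (Λ : Fin (2*n) → ℂ)
    (hgev : A.map Complex.ofReal * V = B.map Complex.ofReal * V * Matrix.diagonal Λ)
    (hRe : ∀ j, (Λ j).re ≠ 0)
    (Ω : Fin k → ℝ) (hΩ : ∀ κ : Fin k → ℤ, κ ≠ 0 → kdot κ Ω ≠ 0)
    (Fc : (Fin k → ℤ) → Fin (2*n) → ℂ) (hFsum : Summable fun κ => ‖Fc κ‖)
    (F : ℝ → Fin (2*n) → ℝ)
    (hF : ∀ t, (fun i => (F t i : ℂ)) =
      ∑' κ : Fin k → ℤ, fun i => Fc κ i * Complex.exp (Complex.I * (kdot κ Ω) * t)) :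
    let c : (Fin k → ℤ) → Fin (2*n) → ℂ := fun κ =>
      V.mulVec ((Matrix.diagonal fun j =>
        1 / (Complex.I * (kdot κ Ω) - Λ j)).mulVec
          (((B.map Complex.ofReal * V)⁻¹).mulVec (Fc κ)))
    let z : ℝ → Fin (2*n) → ℂ := fun t =>
      ∑' κ : Fin k → ℤ, fun i => c κ i * Complex.exp (Complex.I * (kdot κ Ω) * t)
    (∀ t : ℝ, Summable fun κ : Fin k → ℤ =>
      ‖(fun i => c κ i * Complex.exp (Complex.I * (kdot κ Ω) * t))‖) ∧
    TendstoUniformly (fun (u : Finset (Fin k → ℤ)) (t : ℝ) =>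
      ∑ κ ∈ u, fun i => c κ i * Complex.exp (Complex.I * (kdot κ Ω) * t))
      z Filter.atTop ∧
    ContDiff ℝ 1 z ∧
    (∀ t, (B.map Complex.ofReal).mulVec (deriv z t) =
      (A.map Complex.ofReal).mulVec (z t) + fun i => (F t i : ℂ)) ∧
    (∀ v : ℝ → Fin (2*n) → ℂ, Differentiable ℝ v →
      (∀ t, (B.map Complex.ofReal).mulVec (deriv v t) =
        (A.map Complex.ofReal).mulVec (v t) + fun i => (F t i : ℂ)) →
      (∃ M : ℝ, ∀ t, ‖v t‖ ≤ M) → v = z) := by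
  intro c z
  have hBc : IsUnit (B.map Complex.ofReal) := hB.map Complex.ofRealHom.mapMatrix
  have hBV : IsUnit (B.map Complex.ofReal * V) := hBc.mul hV
  have hcsum : Summable fun κ => ‖c κ‖ :=
    summable_norm_mulVec V (summable_norm_diagonal (fun κ => kdot κ Ω) Λ hRe
      (summable_norm_mulVec _ hFsum))
  have hmode : ∀ κ, B.map Complex.ofReal *ᵥ ((Complex.I * (kdot κ Ω)) • c κ) =
      A.map Complex.ofReal *ᵥ c κ + Fc κ := by
    intro κ
    refine modal_identity _ _ V hBV Λ hgev _ (fun j h => hRe j ?_) _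
    simpa using congrArg Complex.re h
  have hdsum : Summable fun κ => ‖(Complex.I * (kdot κ Ω)) • c κ‖ := by
    have h1 : Summable fun κ => ‖A.map Complex.ofReal *ᵥ c κ + Fc κ‖ :=
      Summable.of_nonneg_of_le (fun _ => norm_nonneg _) (fun _ => norm_add_le _ _)
        ((summable_norm_mulVec _ hcsum).add hFsum)
    refine (summable_norm_mulVec (B.map Complex.ofReal)⁻¹ h1).congr fun κ => ?_
    rw [← hmode, Matrix.mulVec_mulVec _ (B.map Complex.ofReal)⁻¹,
      Matrix.nonsing_inv_mul _ ((Matrix.isUnit_iff_isUnit_det _).1 hBc), Matrix.one_mulVec]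
  have hexp : ∀ (κ : Fin k → ℤ) (t : ℝ), ‖Complex.exp (Complex.I * (kdot κ Ω) * t)‖ = 1 := by
    intro κ t
    rw [Complex.norm_exp]
    simp
  have hsm : ∀ (b : Fin (2*n) → ℂ) (κ : Fin k → ℤ) (t : ℝ),
      (fun i => b i * Complex.exp (Complex.I * (kdot κ Ω) * t)) =
        Complex.exp (Complex.I * (kdot κ Ω) * t) • b := by
    intro b κ t
    ext i
    simp [mul_comm]
  have hnorm : ∀ (b : Fin (2*n) → ℂ) (κ : Fin k → ℤ) (t : ℝ),
      ‖Complex.exp (Complex.I * (kdot κ Ω) * t) • b‖ = ‖b‖ := by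
    intro b κ t
    rw [norm_smul, hexp, one_mul]
  have hzdef : z = fun t : ℝ =>
      ∑' κ : Fin k → ℤ, Complex.exp (Complex.I * (kdot κ Ω) * t) • c κ := by
    funext t
    exact tsum_congr fun κ => hsm (c κ) κ t
  have hsumm : ∀ (b : (Fin k → ℤ) → Fin (2*n) → ℂ), (Summable fun κ => ‖b κ‖) → ∀ t : ℝ,
      Summable fun κ => Complex.exp (Complex.I * (kdot κ Ω) * t) • b κ := by
    intro b hb t
    refine Summable.of_norm ?_
    simpa only [hnorm] using hb
  have hderiv : ∀ t : ℝ, HasDerivAt z (∑' κ : Fin k → ℤ,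
      Complex.exp (Complex.I * (kdot κ Ω) * t) • ((Complex.I * (kdot κ Ω)) • c κ)) t := by
    intro t
    rw [hzdef]
    refine hasDerivAt_tsum
      (g := fun κ (t : ℝ) => Complex.exp (Complex.I * (kdot κ Ω) * t) • c κ)
      (g' := fun κ (t : ℝ) =>
        Complex.exp (Complex.I * (kdot κ Ω) * t) • ((Complex.I * (kdot κ Ω)) • c κ))
      hdsum (fun κ t => ?_) (fun κ t => (hnorm _ κ t).le) (hsumm c hcsum 0) t
    have h1 : HasDerivAt (fun t : ℝ => Complex.I * (kdot κ Ω) * (t : ℂ))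
        (Complex.I * (kdot κ Ω)) t := by
      simpa using (Complex.ofRealCLM.hasDerivAt (x := t)).const_mul (Complex.I * (kdot κ Ω))
    refine (h1.cexp.smul_const (c κ)).congr_deriv ?_
    rw [smul_smul]
  have hsol : ∀ t, (B.map Complex.ofReal).mulVec (deriv z t) =
      (A.map Complex.ofReal).mulVec (z t) + fun i => (F t i : ℂ) := by
    intro t
    rw [(hderiv t).deriv, hF t, hzdef, mulVec_tsum _ (hsumm _ hdsum t),
      mulVec_tsum _ (hsumm _ hcsum t)]
    rw [tsum_congr fun κ => hsm (Fc κ) κ t, ← Summable.tsum_add _ (hsumm _ hFsum t)]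
    · refine tsum_congr fun κ => ?_
      rw [Matrix.mulVec_smul, hmode, smul_add, Matrix.mulVec_smul]
    · simp only [Matrix.mulVec_smul]
      exact hsumm _ (summable_norm_mulVec _ hcsum) t
  refine ⟨fun t => ?_, ?_, ?_, hsol, ?_⟩
  · exact hcsum.congr fun κ => by rw [hsm (c κ) κ t, hnorm]
  · exact tendstoUniformly_tsum hcsum fun κ t => by rw [hsm (c κ) κ t, hnorm]
  · rw [contDiff_one_iff_deriv]
    refine ⟨fun t => (hderiv t).differentiableAt, ?_⟩
    rw [funext fun t => (hderiv t).deriv]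
    exact continuous_tsum (fun κ => by fun_prop) hdsum fun κ t => (hnorm _ κ t).le
  · rintro v hv hveq ⟨M, hM⟩
    funext t
    refine sub_eq_zero.1 (homogeneous_eq_zero _ _ V hV hBV Λ hgev hRe (fun t => v t - z t)
      (fun t => deriv v t - deriv z t)
      (fun t => (hv t).hasDerivAt.sub (hderiv t).differentiableAt.hasDerivAt) (fun t => ?_)
      (M + ∑' κ, ‖c κ‖) (fun t => ?_) t)
    · rw [Matrix.mulVec_sub, Matrix.mulVec_sub, hveq, hsol]
      abel
    · refine (norm_sub_le _ _).trans (add_le_add (hM t) ?_)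
      rw [hzdef]
      exact tsum_of_norm_bounded hcsum.hasSum fun κ => (hnorm _ κ t).le
end

section
/- Assume Re λ_j ≠ 0 for every j = 1,…,2n, and let F(t) = Σ_{κ∈ℤ^k} F_κ e^{i⟨κ,Ω⟩t} with Σ_{κ∈ℤ^k} |F_κ| < ∞ and F real-valued. Let u : 𝕋^k → ℝ^{2n} be continuous and suppose z(t) := u(Ωt) is C¹ and solves the nonlinear system B ż = A z − R(z) + F(t) for all t ∈ ℝ. Then for every κ ∈ ℤ^k the Fourier coefficients of u satisfy u_κ = V H(T_κ) (B V)^{−1} ( F_κ − (R∘u)_κ ), where (R∘u)_κ := (2π)^{−k} ∫_{𝕋^k} R(u(θ)) e^{−i⟨κ,θ⟩} dθ. -/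
/-- The `κ`-th Fourier coefficient `(2π)^{−k} ∫_{𝕋^k} v(θ) e^{−i⟨κ,θ⟩} dθ` of a function on
the `k`-torus, computed over the fundamental domain `(0, 2π]^k`. -/
noncomputable def torusCoeff {k m : ℕ} (v : (Fin k → ℝ) → Fin m → ℂ)
    (κ : Fin k → ℤ) : Fin m → ℂ :=
  ((2 * Real.pi) ^ k)⁻¹ •
    ∫ θ in Set.univ.pi fun _ : Fin k => Set.Ioc (0:ℝ) (2 * Real.pi),
      Complex.exp (-Complex.I * (∑ i, (κ i : ℝ) * θ i)) • v θ

open MeasureTheory Filter Topology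

/-! ### Functions and averages on the torus -/

/-- The covering map `ℝ^k → 𝕋^k` onto Mathlib's unit torus `(ℝ/ℤ)^k`, for angles of
period `2π`. -/
noncomputable def torusProj {k : ℕ} (θ : Fin k → ℝ) : UnitAddTorus (Fin k) :=
  fun i => ((θ i / (2 * Real.pi) : ℝ) : UnitAddCircle)

lemma continuous_torusProj {k : ℕ} : Continuous (torusProj (k := k)) := by
  unfold torusProj
  refine continuous_pi fun i => (AddCircle.continuous_mk' 1).comp (by fun_prop)

lemma mFourier_torusProj {k : ℕ} (κ : Fin k → ℤ) (θ : Fin k → ℝ) :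
    UnitAddTorus.mFourier κ (torusProj θ) = Complex.exp (Complex.I * (kdot κ θ : ℝ)) := by
  simp only [UnitAddTorus.mFourier, ContinuousMap.coe_mk, torusProj, kdot, fourier_coe_apply]
  rw [← Complex.exp_sum, Complex.ofReal_sum, Finset.mul_sum]
  congr 1
  refine Finset.sum_congr rfl fun i _ => ?_
  have : (Real.pi : ℂ) ≠ 0 := by exact_mod_cast Real.pi_ne_zero
  push_cast
  field_simp

/-- A continuous `2π`-periodic function on `ℝ^k` descends to the torus. -/
lemma exists_torus_lift {k : ℕ} (w : (Fin k → ℝ) → ℂ) (hw : Continuous w)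
    (hper : ∀ (θ : Fin k → ℝ) (m : Fin k → ℤ), w (fun i => θ i + 2 * Real.pi * m i) = w θ) :
    ∃ g : C(UnitAddTorus (Fin k), ℂ), ∀ θ, g (torusProj θ) = w θ := by
  have hq : IsOpenQuotientMap (Pi.map fun (_ : Fin k) (x : ℝ) => (x : UnitAddCircle)) :=
    IsOpenQuotientMap.piMap fun _ => QuotientAddGroup.isOpenQuotientMap_mk
  have hpi : (2 * Real.pi) ≠ 0 := by positivity
  have hout : ∀ x : Fin k → ℝ,
      w (fun i => 2 * Real.pi * (Quotient.out ((x i : ℝ) : UnitAddCircle) : ℝ))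
        = w (fun i => 2 * Real.pi * x i) := by
    intro x
    have h : ∀ i, ∃ m : ℤ, (Quotient.out ((x i : ℝ) : UnitAddCircle) : ℝ) = x i + m := by
      intro i
      have h1 : ((Quotient.out ((x i : ℝ) : UnitAddCircle) : ℝ) : UnitAddCircle) = (x i : ℝ) :=
        QuotientAddGroup.out_eq' _
      rw [← sub_eq_zero, ← AddCircle.coe_sub, AddCircle.coe_eq_zero_iff] at h1
      obtain ⟨m, hm⟩ := h1
      exact ⟨m, by simp at hm; linarith⟩
    choose m hm using h
    rw [← hper (fun i => 2 * Real.pi * x i) m]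
    congr 1
    funext i
    rw [hm]; ring
  refine ⟨⟨fun p => w fun i => 2 * Real.pi * (Quotient.out (p i) : ℝ), ?_⟩, ?_⟩
  · rw [← hq.continuous_comp_iff]
    have : ((fun p : UnitAddTorus (Fin k) => w fun i => 2 * Real.pi * (Quotient.out (p i) : ℝ)) ∘
        Pi.map fun (_ : Fin k) (x : ℝ) => (x : UnitAddCircle))
        = fun x => w fun i => 2 * Real.pi * x i := funext hout
    rw [this]
    fun_prop
  · intro θ
    refine (hout fun i => θ i / (2 * Real.pi)).trans ?_
    congr 1
    funext i
    field_simp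

/-- The functional `g ↦ c ∫ g(p(x)) dμ(x)` on continuous functions on the torus. -/
noncomputable def meanCLM {k : ℕ} {X : Type*} [TopologicalSpace X] [MeasurableSpace X]
    [OpensMeasurableSpace X] [SecondCountableTopology X]
    (c : ℝ) (μ : Measure X) [IsFiniteMeasure μ] (p : C(X, UnitAddTorus (Fin k))) :
    C(UnitAddTorus (Fin k), ℂ) →L[ℂ] ℂ :=
  have hint : ∀ g : C(UnitAddTorus (Fin k), ℂ), Integrable (fun x => g (p x)) μ := fun g =>
    Integrable.of_bound (g.continuous.comp p.continuous).aestronglyMeasurable ‖g‖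
      (Eventually.of_forall fun x => g.norm_coe_le_norm _)
  LinearMap.mkContinuous
    { toFun := fun g => (c : ℂ) * ∫ x, g (p x) ∂μ
      map_add' := fun g h => by
        simp only [ContinuousMap.add_apply]
        rw [integral_add (hint g) (hint h), mul_add]
      map_smul' := fun a g => by
        simp only [ContinuousMap.smul_apply, smul_eq_mul, RingHom.id_apply]
        rw [integral_const_mul]; ring }
    (|c| * μ.real Set.univ) (fun g => by
      simp only [LinearMap.coe_mk, AddHom.coe_mk, norm_mul, Complex.norm_real, Real.norm_eq_abs]
      have h := norm_integral_le_of_norm_le_const (μ := μ) (f := fun x => g (p x)) (C := ‖g‖)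
        (Eventually.of_forall fun x => g.norm_coe_le_norm _)
      calc _ ≤ |c| * (‖g‖ * μ.real Set.univ) := by gcongr
        _ = _ := by ring)

lemma meanCLM_apply {k : ℕ} {X : Type*} [TopologicalSpace X] [MeasurableSpace X]
    [OpensMeasurableSpace X] [SecondCountableTopology X]
    (c : ℝ) (μ : Measure X) [IsFiniteMeasure μ] (p : C(X, UnitAddTorus (Fin k)))
    (g : C(UnitAddTorus (Fin k), ℂ)) : meanCLM c μ p g = (c : ℂ) * ∫ x, g (p x) ∂μ := rfl

lemma norm_meanCLM_le {k : ℕ} {X : Type*} [TopologicalSpace X] [MeasurableSpace X]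
    [OpensMeasurableSpace X] [SecondCountableTopology X]
    (c : ℝ) (μ : Measure X) [IsFiniteMeasure μ] (p : C(X, UnitAddTorus (Fin k))) :
    ‖meanCLM c μ p‖ ≤ |c| * μ.real Set.univ :=
  ContinuousLinearMap.opNorm_le_bound _ (by positivity) fun g => by
    rw [meanCLM_apply, norm_mul, Complex.norm_real, Real.norm_eq_abs]
    have h := norm_integral_le_of_norm_le_const (μ := μ) (f := fun x => g (p x)) (C := ‖g‖)
      (Eventually.of_forall fun x => g.norm_coe_le_norm _)
    calc _ ≤ |c| * (‖g‖ * μ.real Set.univ) := by gcongr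
      _ = _ := by ring

/-- The fundamental domain `(0, 2π]^k`. -/
abbrev box (k : ℕ) : Set (Fin k → ℝ) :=
  Set.univ.pi fun _ : Fin k => Set.Ioc (0:ℝ) (2 * Real.pi)

instance (k : ℕ) : IsFiniteMeasure ((volume : Measure (Fin k → ℝ)).restrict (box k)) := by
  rw [volume_pi, Measure.restrict_pi_pi]
  infer_instance

/-- The normalised Haar integral on the torus, computed over the box `(0, 2π]^k`. -/
noncomputable def spaceMean (k : ℕ) : C(UnitAddTorus (Fin k), ℂ) →L[ℂ] ℂ :=
  meanCLM ((2 * Real.pi) ^ k)⁻¹ (volume.restrict (box k)) ⟨torusProj, continuous_torusProj⟩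

/-- The time average over `(0, T]` along the linear flow `t ↦ Ω t`. -/
noncomputable def timeMean {k : ℕ} (Ω : Fin k → ℝ) (T : ℝ) :
    C(UnitAddTorus (Fin k), ℂ) →L[ℂ] ℂ :=
  meanCLM T⁻¹ (volume.restrict (Set.Ioc 0 T))
    ⟨fun t => torusProj fun i => Ω i * t, continuous_torusProj.comp (by fun_prop)⟩

lemma norm_timeMean_le {k : ℕ} (Ω : Fin k → ℝ) {T : ℝ} (hT : 0 < T) : ‖timeMean Ω T‖ ≤ 1 := by
  refine (norm_meanCLM_le _ _ _).trans (le_of_eq ?_)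
  simp [abs_of_pos hT, hT.le, hT.ne']

/-! ### Kronecker-Weyl equidistribution -/

/-- Orthogonality of the characters on the box. -/
lemma spaceMean_mFourier {k : ℕ} (κ : Fin k → ℤ) :
    spaceMean k (UnitAddTorus.mFourier κ) = if κ = 0 then 1 else 0 := by
  have hpi : (Real.pi : ℂ) ≠ 0 := by exact_mod_cast Real.pi_ne_zero
  have hone : ∀ m : ℤ, ∫ x in Set.Ioc (0:ℝ) (2 * Real.pi),
      (fourier m ((x / (2 * Real.pi) : ℝ) : UnitAddCircle) : ℂ)
        = if m = 0 then (2 * Real.pi : ℂ) else 0 := by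
    intro m
    have h1 : ∀ x : ℝ, (fourier m ((x / (2 * Real.pi) : ℝ) : UnitAddCircle) : ℂ)
        = Complex.exp ((Complex.I * m) * x) := by
      intro x
      rw [fourier_coe_apply]
      congr 1
      push_cast
      field_simp
    simp_rw [h1]
    rw [← intervalIntegral.integral_of_le (by positivity)]
    split_ifs with hm
    · simp [hm]
    · have hc : Complex.I * m ≠ 0 := mul_ne_zero Complex.I_ne_zero (by exact_mod_cast hm)
      rw [integral_exp_mul_complex hc]
      have : Complex.exp (Complex.I * m * (2 * Real.pi : ℝ)) = 1 := by
        rw [Complex.exp_eq_one_iff]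
        exact ⟨m, by push_cast; ring⟩
      rw [this]
      simp
  have hpr : ∫ θ, UnitAddTorus.mFourier κ (torusProj θ) ∂(volume.restrict (box k))
      = ∏ i, if κ i = 0 then (2 * Real.pi : ℂ) else 0 := by
    rw [volume_pi, Measure.restrict_pi_pi]
    simp only [UnitAddTorus.mFourier, ContinuousMap.coe_mk, torusProj]
    rw [integral_fintype_prod_eq_prod
      (f := fun i (x : ℝ) => (fourier (κ i) ((x / (2 * Real.pi) : ℝ) : UnitAddCircle) : ℂ))]
    exact Finset.prod_congr rfl fun i _ => hone (κ i)
  rw [spaceMean, meanCLM_apply]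
  simp only [ContinuousMap.coe_mk]
  rw [hpr]
  split_ifs with h
  · subst h
    simp
  · obtain ⟨i, hi⟩ := Function.ne_iff.1 h
    rw [Finset.prod_eq_zero (Finset.mem_univ i) (if_neg hi), mul_zero]

lemma kdot_mul {k : ℕ} (κ : Fin k → ℤ) (Ω : Fin k → ℝ) (t : ℝ) :
    kdot κ (fun i => Ω i * t) = kdot κ Ω * t := by
  simp only [kdot, Finset.sum_mul]
  exact Finset.sum_congr rfl fun i _ => by ring

lemma tendsto_timeMean_mFourier {k : ℕ} (Ω : Fin k → ℝ)
    (hΩ : ∀ κ : Fin k → ℤ, κ ≠ 0 → kdot κ Ω ≠ 0) (κ : Fin k → ℤ) :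
    Tendsto (fun T => timeMean Ω T (UnitAddTorus.mFourier κ)) atTop
      (𝓝 (spaceMean k (UnitAddTorus.mFourier κ))) := by
  rw [spaceMean_mFourier]
  have hval : ∀ T : ℝ, 0 < T → timeMean Ω T (UnitAddTorus.mFourier κ)
      = (T⁻¹ : ℝ) * ∫ t in (0:ℝ)..T, Complex.exp ((Complex.I * (kdot κ Ω : ℝ)) * t) := by
    intro T hT
    rw [timeMean, meanCLM_apply, intervalIntegral.integral_of_le hT.le]
    simp only [ContinuousMap.coe_mk, mFourier_torusProj, kdot_mul]
    push_cast
    simp only [mul_assoc]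
  split_ifs with h
  · subst h
    refine tendsto_const_nhds.congr' ?_
    filter_upwards [eventually_gt_atTop 0] with T hT
    rw [hval T hT]
    have : (T : ℂ) ≠ 0 := by exact_mod_cast hT.ne'
    simp [kdot, this]
  · have hc : Complex.I * (kdot κ Ω : ℝ) ≠ 0 :=
      mul_ne_zero Complex.I_ne_zero (by exact_mod_cast hΩ κ h)
    have hlim : Tendsto (fun T : ℝ => T⁻¹ * (2 / ‖Complex.I * (kdot κ Ω : ℝ)‖)) atTop (𝓝 0) := by
      simpa using tendsto_inv_atTop_zero.mul_const (2 / ‖Complex.I * (kdot κ Ω : ℝ)‖)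
    refine squeeze_zero_norm' ?_ hlim
    filter_upwards [eventually_gt_atTop 0] with T hT
    rw [hval T hT, integral_exp_mul_complex hc, norm_mul, norm_div, Complex.norm_real,
      Real.norm_of_nonneg (inv_pos.2 hT).le]
    gcongr
    refine (norm_sub_le _ _).trans (le_of_eq ?_)
    rw [show Complex.I * (kdot κ Ω : ℝ) * T = ((kdot κ Ω * T : ℝ) : ℂ) * Complex.I by
      push_cast; ring, Complex.norm_exp_ofReal_mul_I]
    norm_num

/-- Kronecker-Weyl: for incommensurate frequencies, time averages of a continuous function
along the linear flow converge to its space average. True for characters, hence on their dense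
span, hence everywhere since the averages are uniformly bounded functionals. -/
lemma tendsto_timeMean {k : ℕ} (Ω : Fin k → ℝ)
    (hΩ : ∀ κ : Fin k → ℤ, κ ≠ 0 → kdot κ Ω ≠ 0) (g : C(UnitAddTorus (Fin k), ℂ)) :
    Tendsto (fun T => timeMean Ω T g) atTop (𝓝 (spaceMean k g)) := by
  have hspan : ∀ h ∈ Submodule.span ℂ (Set.range (UnitAddTorus.mFourier (d := Fin k))),
      Tendsto (fun T => timeMean Ω T h) atTop (𝓝 (spaceMean k h)) := by
    intro h hh
    induction hh using Submodule.span_induction with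
    | mem x hx =>
      obtain ⟨κ, rfl⟩ := hx
      exact tendsto_timeMean_mFourier Ω hΩ κ
    | zero => simp
    | add x y _ _ hx hy => simpa using hx.add hy
    | smul a x _ hx => simpa using hx.const_mul a
  have hsp : ‖spaceMean k‖ ≤ 1 := by
    refine (norm_meanCLM_le _ _ _).trans (le_of_eq ?_)
    have : (0:ℝ) < (2 * Real.pi) ^ k := by positivity
    have hpi := Real.pi_pos.le
    have hbox : (volume : Measure (Fin k → ℝ)).real (box k) = (2 * Real.pi) ^ k := by
      rw [measureReal_def, volume_pi_pi]
      simp [hpi]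
    rw [measureReal_restrict_apply MeasurableSet.univ, Set.univ_inter, hbox,
      abs_of_pos (inv_pos.2 this), inv_mul_cancel₀ this.ne']
  have hg : g ∈ closure (Submodule.span ℂ (Set.range (UnitAddTorus.mFourier (d := Fin k))) :
      Set C(UnitAddTorus (Fin k), ℂ)) := by
    have := UnitAddTorus.span_mFourier_closure_eq_top (d := Fin k)
    rw [← Submodule.topologicalClosure_coe, this]
    trivial
  rw [Metric.tendsto_nhds]
  intro ε hε
  obtain ⟨h, hh, hd⟩ := Metric.mem_closure_iff.1 hg (ε / 3) (by positivity)
  filter_upwards [Metric.tendsto_nhds.1 (hspan h hh) (ε / 3) (by positivity),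
    eventually_gt_atTop 0] with T h1 hT
  have hb : ∀ L : C(UnitAddTorus (Fin k), ℂ) →L[ℂ] ℂ, ‖L‖ ≤ 1 → dist (L g) (L h) < ε / 3 := by
    intro L hL
    rw [dist_eq_norm, ← map_sub]
    refine (L.le_opNorm _).trans_lt ?_
    rw [dist_eq_norm] at hd
    nlinarith [norm_nonneg (g - h)]
  calc dist (timeMean Ω T g) (spaceMean k g)
      ≤ dist (timeMean Ω T g) (timeMean Ω T h) + dist (timeMean Ω T h) (spaceMean k h)
        + dist (spaceMean k h) (spaceMean k g) := dist_triangle4 _ _ _ _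
    _ < ε / 3 + ε / 3 + ε / 3 := by
        have := hb _ (norm_timeMean_le Ω hT)
        have h2 := hb _ hsp
        rw [dist_comm] at h2
        linarith
    _ = ε := by ring

/-! ### Long-time averages -/

/-- `c` is the long-time average of `φ` over `[0, T]`, `T → ∞`. -/
def HasMean (φ : ℝ → ℂ) (c : ℂ) : Prop :=
  Tendsto (fun T : ℝ => ((T⁻¹ : ℝ) : ℂ) * ∫ t in (0:ℝ)..T, φ t) atTop (𝓝 c)

namespace HasMean

variable {φ ψ : ℝ → ℂ} {c d : ℂ}

lemma unique (h : HasMean φ c) (h' : HasMean φ d) : c = d := tendsto_nhds_unique h h'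

lemma add (h : HasMean φ c) (h' : HasMean ψ d) (hφ : Continuous φ) (hψ : Continuous ψ) :
    HasMean (fun t => φ t + ψ t) (c + d) := by
  refine (Tendsto.add h h').congr fun T => ?_
  rw [intervalIntegral.integral_add (hφ.intervalIntegrable _ _) (hψ.intervalIntegrable _ _),
    mul_add]

lemma const_mul (h : HasMean φ c) (a : ℂ) : HasMean (fun t => a * φ t) (a * c) := by
  refine (Tendsto.const_mul a h).congr fun T => ?_
  rw [intervalIntegral.integral_const_mul]
  ring

lemma sub (h : HasMean φ c) (h' : HasMean ψ d) (hφ : Continuous φ) (hψ : Continuous ψ) :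
    HasMean (fun t => φ t - ψ t) (c - d) := by
  simpa [sub_eq_add_neg] using h.add (h'.const_mul (-1)) hφ (continuous_const.mul hψ)

lemma sum {ι : Type*} [Fintype ι] {φ : ι → ℝ → ℂ} {c : ι → ℂ} (h : ∀ i, HasMean (φ i) (c i))
    (hφ : ∀ i, Continuous (φ i)) : HasMean (fun t => ∑ i, φ i t) (∑ i, c i) := by
  refine (tendsto_finsetSum _ fun i _ => h i).congr fun T => ?_
  rw [intervalIntegral.integral_finsetSum fun i _ => (hφ i).intervalIntegrable _ _,
    Finset.mul_sum]

/-- A modulated derivative `e^{-iωt} ζ'(t)` has mean `iω` times that of `e^{-iωt} ζ(t)`: after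
integration by parts the boundary terms are bounded, so they vanish on division by `T`. -/
lemma deriv_of_bounded {ζ ζ' : ℝ → ℂ} (hζ : ∀ t, HasDerivAt ζ (ζ' t) t) (hζ' : Continuous ζ')
    {M : ℝ} (hM : ∀ t, ‖ζ t‖ ≤ M) (ω : ℝ)
    (h : HasMean (fun t => Complex.exp (-Complex.I * ω * t) * ζ t) c) :
    HasMean (fun t => Complex.exp (-Complex.I * ω * t) * ζ' t) (Complex.I * ω * c) := by
  have hζc : Continuous ζ := continuous_iff_continuousAt.2 fun t => (hζ t).continuousAt
  have hexp : ∀ t : ℝ, ‖Complex.exp (-Complex.I * ω * t)‖ = 1 := fun t => by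
    rw [show -Complex.I * ω * t = ((-(ω * t) : ℝ) : ℂ) * Complex.I by push_cast; ring,
      Complex.norm_exp_ofReal_mul_I]
  have hd : ∀ t : ℝ, HasDerivAt (fun t : ℝ => Complex.exp (-Complex.I * ω * t) * ζ t)
      (Complex.exp (-Complex.I * ω * t) * ζ' t
        - Complex.I * ω * (Complex.exp (-Complex.I * ω * t) * ζ t)) t := by
    intro t
    have h1 : HasDerivAt (fun t : ℝ => -Complex.I * ω * (t : ℂ)) (-Complex.I * ω) t := by
      simpa using (Complex.ofRealCLM.hasDerivAt (x := t)).const_mul (-Complex.I * (ω : ℂ))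
    exact (h1.cexp.mul (hζ t)).congr_deriv (by ring)
  have hbdry : HasMean (fun t => Complex.exp (-Complex.I * ω * t) * ζ' t
      - Complex.I * ω * (Complex.exp (-Complex.I * ω * t) * ζ t)) 0 := by
    have hlim : Tendsto (fun T : ℝ => T⁻¹ * (M + M)) atTop (𝓝 0) := by
      simpa using tendsto_inv_atTop_zero.mul_const (M + M)
    refine squeeze_zero_norm' ?_ hlim
    filter_upwards [eventually_gt_atTop 0] with T hT
    rw [intervalIntegral.integral_eq_sub_of_hasDerivAt (fun t _ => hd t)
      (Continuous.intervalIntegrable (by fun_prop) _ _), norm_mul, Complex.norm_real,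
      Real.norm_of_nonneg (inv_pos.2 hT).le]
    gcongr
    refine (norm_sub_le _ _).trans ?_
    rw [norm_mul, norm_mul, hexp, hexp, one_mul, one_mul]
    exact add_le_add (hM _) (hM _)
  have := hbdry.add (h.const_mul (Complex.I * ω)) (by fun_prop) (by fun_prop)
  simpa using this

end HasMean

/-! ### Bohr coefficients of quasi-periodic functions -/

lemma hasMean_torus {k : ℕ} (Ω : Fin k → ℝ)
    (hΩ : ∀ κ : Fin k → ℤ, κ ≠ 0 → kdot κ Ω ≠ 0) (g : C(UnitAddTorus (Fin k), ℂ)) :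
    HasMean (fun t => g (torusProj fun i => Ω i * t)) (spaceMean k g) := by
  refine (tendsto_timeMean Ω hΩ g).congr' ?_
  filter_upwards [eventually_gt_atTop 0] with T hT
  rw [timeMean, meanCLM_apply, intervalIntegral.integral_of_le hT.le]
  rfl

lemma mFourier_neg_flow {k : ℕ} (κ : Fin k → ℤ) (Ω : Fin k → ℝ) (t : ℝ) :
    UnitAddTorus.mFourier (-κ) (torusProj fun i => Ω i * t)
      = Complex.exp (-Complex.I * (kdot κ Ω : ℝ) * t) := by
  rw [mFourier_torusProj, kdot_mul]
  congr 1
  simp [kdot, mul_assoc]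

/-- The Fourier coefficients of a continuous function on the torus are the Bohr coefficients of
its restriction to the linear flow. -/
lemma hasMean_torusCoeff {k m : ℕ} (Ω : Fin k → ℝ)
    (hΩ : ∀ κ : Fin k → ℤ, κ ≠ 0 → kdot κ Ω ≠ 0) (w : (Fin k → ℝ) → Fin m → ℂ)
    (hw : Continuous w)
    (hper : ∀ (θ : Fin k → ℝ) (m : Fin k → ℤ), w (fun i => θ i + 2 * Real.pi * m i) = w θ)
    (κ : Fin k → ℤ) (j : Fin m) :
    HasMean (fun t => Complex.exp (-Complex.I * (kdot κ Ω : ℝ) * t) * w (fun i => Ω i * t) j)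
      (torusCoeff w κ j) := by
  choose g hg using fun j => exists_torus_lift (fun θ => w θ j) (by fun_prop)
    (fun θ m => by rw [hper θ m])
  have hneg : ∀ θ, UnitAddTorus.mFourier (-κ) (torusProj θ)
      = Complex.exp (-Complex.I * (∑ i, (κ i : ℝ) * θ i)) := by
    intro θ
    rw [mFourier_torusProj]
    congr 1
    simp [kdot]
  have hc : torusCoeff w κ j = spaceMean k (UnitAddTorus.mFourier (-κ) * g j) := by
    have hint : ∀ j, Integrable (fun θ : Fin k → ℝ =>
        (Complex.exp (-Complex.I * (∑ i, (κ i : ℝ) * θ i)) • w θ) j)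
        (volume.restrict (box k)) := by
      intro j
      have : (fun θ : Fin k → ℝ => (Complex.exp (-Complex.I * (∑ i, (κ i : ℝ) * θ i)) • w θ) j)
          = fun θ => (UnitAddTorus.mFourier (-κ) * g j) (torusProj θ) := by
        funext θ
        rw [ContinuousMap.mul_apply, hneg, hg]
        rfl
      rw [this]
      exact Integrable.of_bound
        ((ContinuousMap.continuous _).comp continuous_torusProj).aestronglyMeasurable _
        (Eventually.of_forall fun θ => ContinuousMap.norm_coe_le_norm _ _)
    rw [torusCoeff, Pi.smul_apply, eval_integral hint, spaceMean, meanCLM_apply,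
      Complex.real_smul]
    congr 1
    refine integral_congr_ae (Eventually.of_forall fun θ => ?_)
    simp only [ContinuousMap.coe_mk, ContinuousMap.mul_apply, hneg, hg, Pi.smul_apply,
      smul_eq_mul]
  rw [hc]
  have := hasMean_torus Ω hΩ (UnitAddTorus.mFourier (-κ) * g j)
  simpa only [ContinuousMap.mul_apply, mFourier_neg_flow, hg] using this

/-- The Bohr coefficients of an absolutely convergent quasi-periodic series are the coefficients
of the series. -/
lemma hasMean_series {k : ℕ} (Ω : Fin k → ℝ)
    (hΩ : ∀ κ : Fin k → ℤ, κ ≠ 0 → kdot κ Ω ≠ 0) (a : (Fin k → ℤ) → ℂ)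
    (ha : Summable fun κ => ‖a κ‖) (κ : Fin k → ℤ) :
    HasMean (fun t => Complex.exp (-Complex.I * (kdot κ Ω : ℝ) * t) *
      ∑' κ', a κ' * Complex.exp (Complex.I * (kdot κ' Ω : ℝ) * t)) (a κ) := by
  have hs : Summable fun κ' => a κ' • UnitAddTorus.mFourier (d := Fin k) κ' := by
    refine Summable.of_norm ?_
    simpa [norm_smul, UnitAddTorus.mFourier_norm] using ha
  set G := ∑' κ', a κ' • UnitAddTorus.mFourier (d := Fin k) κ' with hG
  have hflow : ∀ t : ℝ, G (torusProj fun i => Ω i * t)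
      = ∑' κ', a κ' * Complex.exp (Complex.I * (kdot κ' Ω : ℝ) * t) := by
    intro t
    rw [hG, ← ContinuousMap.tsum_apply hs]
    refine tsum_congr fun κ' => ?_
    rw [ContinuousMap.smul_apply, mFourier_torusProj, kdot_mul, smul_eq_mul]
    push_cast
    simp only [mul_assoc]
  have hmean : spaceMean k (UnitAddTorus.mFourier (-κ) * G) = a κ := by
    have h1 : HasSum (fun κ' => spaceMean k (UnitAddTorus.mFourier (-κ) *
        (a κ' • UnitAddTorus.mFourier (d := Fin k) κ')))
        (spaceMean k (UnitAddTorus.mFourier (-κ) * G)) :=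
      (spaceMean k).hasSum (hs.hasSum.mul_left _)
    have h2 : ∀ κ', spaceMean k (UnitAddTorus.mFourier (-κ) *
        (a κ' • UnitAddTorus.mFourier (d := Fin k) κ')) = if κ' = κ then a κ else 0 := by
      intro κ'
      have : UnitAddTorus.mFourier (-κ) * (a κ' • UnitAddTorus.mFourier (d := Fin k) κ')
          = a κ' • UnitAddTorus.mFourier (-κ + κ') := by
        ext x
        simp only [ContinuousMap.mul_apply, ContinuousMap.smul_apply, UnitAddTorus.mFourier_add,
          smul_eq_mul]
        ring
      rw [this, map_smul, spaceMean_mFourier]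
      by_cases h : κ' = κ
      · simp [h]
      · have h' : -κ + κ' ≠ 0 := fun h0 => h (neg_add_eq_zero.1 h0).symm
        simp [h, h']
    simp only [h2] at h1
    exact h1.unique (hasSum_ite_eq κ (a κ))
  have := hasMean_torus Ω hΩ (UnitAddTorus.mFourier (-κ) * G)
  rw [hmean] at this
  simpa only [ContinuousMap.mul_apply, mFourier_neg_flow, hflow] using this

/-! ### The harmonic balance equation -/

/-- Inversion of `iω B - A` in the generalised eigenbasis. -/
lemma solve_in_eigenbasis {N : ℕ} (A B V : Matrix (Fin N) (Fin N) ℂ) (hB : IsUnit B)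
    (hV : IsUnit V) (Λ : Fin N → ℂ) (hgev : A * V = B * V * Matrix.diagonal Λ) (s : ℂ)
    (hs : ∀ j, s - Λ j ≠ 0) (x f : Fin N → ℂ)
    (h : s • B.mulVec x = A.mulVec x + f) :
    x = V.mulVec ((Matrix.diagonal fun j => 1 / (s - Λ j)).mulVec ((B * V)⁻¹.mulVec f)) := by
  have hBV : IsUnit (B * V).det := (Matrix.isUnit_iff_isUnit_det _).1 (hB.mul hV)
  have hVd : IsUnit V.det := (Matrix.isUnit_iff_isUnit_det _).1 hV
  obtain ⟨y, hx⟩ : ∃ y, x = V.mulVec y := by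
    refine ⟨V⁻¹.mulVec x, ?_⟩
    rw [Matrix.mulVec_mulVec, Matrix.mul_nonsing_inv _ hVd, Matrix.one_mulVec]
  have hf : f = (B * V).mulVec ((Matrix.diagonal fun j => s - Λ j).mulVec y) := by
    have : (Matrix.diagonal fun j => s - Λ j).mulVec y = s • y - (Matrix.diagonal Λ).mulVec y := by
      funext j
      simp [Matrix.mulVec_diagonal, sub_mul]
    rw [this, Matrix.mulVec_sub, Matrix.mulVec_smul, Matrix.mulVec_mulVec, ← hgev,
      ← Matrix.mulVec_mulVec, ← Matrix.mulVec_mulVec, ← hx, h, add_sub_cancel_left]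
  rw [hf, Matrix.mulVec_mulVec (M := (B * V)⁻¹), Matrix.nonsing_inv_mul _ hBV, Matrix.one_mulVec]
  have : (Matrix.diagonal fun j => 1 / (s - Λ j)).mulVec
      ((Matrix.diagonal fun j => s - Λ j).mulVec y) = y := by
    funext j
    rw [Matrix.mulVec_diagonal, Matrix.mulVec_diagonal, ← mul_assoc, one_div_mul_cancel (hs j),
      one_mul]
  rw [this, hx]


/-- if `u : 𝕋^k → ℝ^{2n}` is continuous and `z(t) = u(Ωt)` is a `C¹` solution of
`B ż = A z − R(z) + F(t)`, then the Fourier coefficients of `u` satisfy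
`u_κ = V H(T_κ) (BV)⁻¹ (F_κ − (R∘u)_κ)`. -/
theorem stmt_9 {n k : ℕ} (A B : Matrix (Fin (2*n)) (Fin (2*n)) ℝ) (hB : IsUnit B)
    (V : Matrix (Fin (2*n)) (Fin (2*n)) ℂ) (hV : IsUnit V)
    (Λ : Fin (2*n) → ℂ)
    (hgev : A.map Complex.ofReal * V = B.map Complex.ofReal * V * Matrix.diagonal Λ)
    (hRe : ∀ j, (Λ j).re ≠ 0)
    (R : (Fin (2*n) → ℝ) → Fin (2*n) → ℝ) (K : NNReal) (hR : LipschitzWith K R)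
    (Ω : Fin k → ℝ) (hΩ : ∀ κ : Fin k → ℤ, κ ≠ 0 → kdot κ Ω ≠ 0)
    (Fc : (Fin k → ℤ) → Fin (2*n) → ℂ) (hFsum : Summable fun κ => ‖Fc κ‖)
    (F : ℝ → Fin (2*n) → ℝ)
    (hF : ∀ t, (fun i => (F t i : ℂ)) =
      ∑' κ : Fin k → ℤ, fun i => Fc κ i * Complex.exp (Complex.I * (kdot κ Ω) * t))
    (u : (Fin k → ℝ) → Fin (2*n) → ℝ) (hu : Continuous u)
    (huper : ∀ (θ : Fin k → ℝ) (m : Fin k → ℤ),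
      u (fun i => θ i + 2 * Real.pi * m i) = u θ)
    (hz : ContDiff ℝ 1 fun t : ℝ => u fun i => Ω i * t)
    (hode : ∀ t : ℝ,
      B.mulVec (deriv (fun t : ℝ => u fun i => Ω i * t) t) =
        A.mulVec (u fun i => Ω i * t) - R (u fun i => Ω i * t) + F t) :
    ∀ κ : Fin k → ℤ,
      torusCoeff (fun θ i => (u θ i : ℂ)) κ =
        V.mulVec ((Matrix.diagonal fun j =>
          1 / (Complex.I * (kdot κ Ω) - Λ j)).mulVec
            (((B.map Complex.ofReal * V)⁻¹).mulVec
              (Fc κ - torusCoeff (fun θ i => (R (u θ) i : ℂ)) κ))) := by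
  intro κ
  set z : ℝ → Fin (2*n) → ℝ := fun t => u fun i => Ω i * t with hz_def
  have hRc := hR.continuous
  have hzc : Continuous z := hz.continuous
  have hz'c : Continuous (deriv z) := hz.continuous_deriv_one
  have hzd : ∀ t, HasDerivAt z (deriv z t) t := fun t =>
    ((hz.differentiable one_ne_zero) t).hasDerivAt
  have hmu := hasMean_torusCoeff Ω hΩ (fun θ i => (u θ i : ℂ)) (by fun_prop)
    (fun θ m => by simp only [huper θ m]) κ
  have hmR := hasMean_torusCoeff Ω hΩ (fun θ i => (R (u θ) i : ℂ)) (by fun_prop)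
    (fun θ m => by simp only [huper θ m]) κ
  have hmd : ∀ j, HasMean
      (fun t => Complex.exp (-Complex.I * (kdot κ Ω : ℝ) * t) * (deriv z t j : ℂ))
      (Complex.I * (kdot κ Ω : ℝ) * torusCoeff (fun θ i => (u θ i : ℂ)) κ j) := by
    intro j
    obtain ⟨g, hg⟩ := exists_torus_lift (fun θ => (u θ j : ℂ)) (by fun_prop)
      (fun θ m => by simp only [huper θ m])
    refine HasMean.deriv_of_bounded (ζ := fun t => (z t j : ℂ)) (M := ‖g‖)
      (fun t => ((hasDerivAt_pi.1 (hzd t)) j).ofReal_comp) (by fun_prop) (fun t => ?_) _ (hmu j)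
    rw [hz_def, ← hg]
    exact g.norm_coe_le_norm _
  have hFcomp : ∀ t i, (F t i : ℂ)
      = ∑' κ', Fc κ' i * Complex.exp (Complex.I * (kdot κ' Ω : ℝ) * t) := by
    intro t i
    have hs : Summable fun κ' : Fin k → ℤ =>
        (fun i => Fc κ' i * Complex.exp (Complex.I * (kdot κ' Ω : ℝ) * t)) := by
      refine Summable.of_norm_bounded hFsum fun κ' => ?_
      refine (pi_norm_le_iff_of_nonneg (norm_nonneg _)).2 fun i => ?_
      rw [norm_mul, show Complex.I * (kdot κ' Ω : ℝ) * t
        = ((kdot κ' Ω * t : ℝ) : ℂ) * Complex.I by push_cast; ring,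
        Complex.norm_exp_ofReal_mul_I, mul_one]
      exact norm_le_pi_norm _ i
    have := congrFun (hF t) i
    rw [tsum_apply hs] at this
    exact this
  have hmF : ∀ i, HasMean
      (fun t => Complex.exp (-Complex.I * (kdot κ Ω : ℝ) * t) * (F t i : ℂ)) (Fc κ i) := by
    intro i
    simp only [hFcomp]
    exact hasMean_series Ω hΩ (fun κ' => Fc κ' i)
      (hFsum.of_nonneg_of_le (fun _ => norm_nonneg _) fun κ' => norm_le_pi_norm _ i) κ
  -- Continuity of the forcing is read off from the differential equation.
  have hFc : Continuous F := by
    have : F = fun t => B.mulVec (deriv z t) - A.mulVec (z t) + R (z t) := by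
      funext t
      rw [hode t]
      abel
    rw [this]
    exact ((continuous_const.matrix_mulVec hz'c).sub (continuous_const.matrix_mulVec hzc)).add
      (hRc.comp hzc)
  refine solve_in_eigenbasis _ _ V ?_ hV Λ hgev _ ?_ _ _ ?_
  · exact hB.map (Complex.ofRealHom.mapMatrix (m := Fin (2*n)))
  · intro j h0
    refine hRe j ?_
    rw [← sub_eq_zero.1 h0]
    simp
  · funext i
    have hL := HasMean.sum (fun j => (hmd j).const_mul (B i j : ℂ)) (fun j => by fun_prop)
    have hA := HasMean.sum (fun j => (hmu j).const_mul (A i j : ℂ)) (fun j => by fun_prop)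
    have hRHS := (hA.sub (hmR i) (by fun_prop) (by fun_prop)).add (hmF i)
      (by fun_prop) (by fun_prop)
    have heq := hL.unique (d := _) (by
      convert hRHS using 1
      funext t
      have h1 := congrArg (fun x : ℝ => (x : ℂ)) (congrFun (hode t) i)
      simp only [Matrix.mulVec, dotProduct, Pi.add_apply, Pi.sub_apply, Complex.ofReal_add,
        Complex.ofReal_sub, Complex.ofReal_sum, Complex.ofReal_mul] at h1
      have h2 := congrArg (fun x => Complex.exp (-Complex.I * (kdot κ Ω : ℝ) * t) * x) h1
      simp only [mul_add, mul_sub, Finset.mul_sum] at h2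
      simpa only [mul_left_comm] using h2)
    simp only [Matrix.mulVec, dotProduct, Pi.add_apply, Pi.sub_apply, Pi.smul_apply,
      Matrix.map_apply, smul_eq_mul, Finset.mul_sum]
    simp only [mul_left_comm (_ : ℂ) (Complex.I * _)] at heq
    rw [← add_sub_assoc, add_sub_right_comm]
    convert heq using 2
end

section
/- Assume Re λ_j ≠ 0 for every j = 1,…,2n, and let F(t) = Σ_{κ∈ℤ^k} F_κ e^{i⟨κ,Ω⟩t} with Σ_{κ∈ℤ^k} |F_κ| < ∞ and F real-valued. Let u : 𝕋^k → ℝ^{2n} be continuous with absolutely summable Fourier coefficients (u(θ) = Σ_κ u_κ e^{i⟨κ,θ⟩} with Σ_κ |u_κ| < ∞), suppose Σ_κ |(R∘u)_κ| < ∞, and suppose u_κ = V H(T_κ) (B V)^{−1} ( F_κ − (R∘u)_κ ) for every κ ∈ ℤ^k. Then z(t) := u(Ωt) is continuously differentiable and solves the nonlinear system B ż = A z − R(z) + F(t) for all t ∈ ℝ. -/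
open UnitAddTorus MeasureTheory
open scoped Pointwise

/-- Characters of `(ℝ/ℤ)^k` evaluated at `x / 2π` are the exponentials `e^{i⟨κ,x⟩}`. -/
lemma mFourier_scaled {k : ℕ} (κ : Fin k → ℤ) (x : Fin k → ℝ) :
    mFourier κ (fun i => ((x i / (2 * Real.pi) : ℝ) : UnitAddCircle)) =
      Complex.exp (Complex.I * (∑ i, (κ i : ℝ) * x i)) := by
  have hpi : (Real.pi : ℂ) ≠ 0 := by exact_mod_cast Real.pi_ne_zero
  simp only [mFourier, ContinuousMap.coe_mk, fourier_coe_apply, ← Complex.exp_sum]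
  congr 1
  push_cast
  rw [Finset.mul_sum]
  refine Finset.sum_congr rfl fun i _ => ?_
  field_simp

/-- Rescaling the torus from period `2π` to period `1` identifies `torusCoeff`, componentwise, with
Mathlib's `mFourierCoeff`. -/
lemma torusCoeff_eq {k m : ℕ} (G : UnitAddTorus (Fin k) → Fin m → ℂ) (hG : Continuous G)
    (κ : Fin k → ℤ) (j : Fin m) :
    torusCoeff (fun θ => G fun i => ((θ i / (2 * Real.pi) : ℝ) : UnitAddCircle)) κ j =
      mFourierCoeff (fun t => G t j) κ := by
  have hpos : 0 < 2 * Real.pi := by positivity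
  have hcont : Continuous fun θ : Fin k → ℝ =>
      Complex.exp (-Complex.I * (∑ i, (κ i : ℝ) * θ i)) •
        G (fun i => ((θ i / (2 * Real.pi) : ℝ) : UnitAddCircle)) := by
    have hmk : Continuous fun θ : Fin k → ℝ =>
        (fun i => ((θ i / (2 * Real.pi) : ℝ) : UnitAddCircle)) :=
      continuous_pi fun i => (AddCircle.continuous_mk' 1).comp ((continuous_apply i).div_const _)
    have hexp : Continuous fun θ : Fin k → ℝ =>
        Complex.exp (-Complex.I * (∑ i, (κ i : ℝ) * θ i)) := by
      fun_prop
    exact hexp.smul (hG.comp hmk)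
  have hint : IntegrableOn (fun θ : Fin k → ℝ =>
      Complex.exp (-Complex.I * (∑ i, (κ i : ℝ) * θ i)) •
        G (fun i => ((θ i / (2 * Real.pi) : ℝ) : UnitAddCircle)))
      (Set.univ.pi fun _ : Fin k => Set.Ioc (0:ℝ) (2 * Real.pi)) :=
    (hcont.continuousOn.integrableOn_compact
      (isCompact_univ_pi fun _ => isCompact_Icc)).mono_set
      (Set.pi_mono fun _ _ => Set.Ioc_subset_Icc_self)
  have hset : (2 * Real.pi) • {x : Fin k → ℝ |
        ∀ i, x i ∈ Set.Ioc ((0 : Fin k → ℝ) i) ((0 : Fin k → ℝ) i + 1)} =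
      Set.univ.pi fun _ : Fin k => Set.Ioc (0:ℝ) (2 * Real.pi) := by
    ext x
    rw [Set.mem_smul_set_iff_inv_smul_mem₀ hpos.ne']
    simp only [Set.mem_ofPred_eq, Set.mem_pi, Set.mem_univ, true_imp_iff, Set.mem_Ioc,
      Pi.smul_apply, smul_eq_mul, Pi.zero_apply, zero_add]
    refine forall_congr' fun i => and_congr ?_ ?_
    · exact mul_pos_iff_of_pos_left (inv_pos.2 hpos)
    · rw [inv_mul_le_iff₀ hpos, mul_one]
  rw [mFourierCoeff_eq_integral _ κ 0]
  have h := Measure.setIntegral_comp_smul_of_pos (volume : Measure (Fin k → ℝ))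
    (fun θ : Fin k → ℝ => Complex.exp (-Complex.I * (∑ i, (κ i : ℝ) * θ i)) •
        G (fun i => ((θ i / (2 * Real.pi) : ℝ) : UnitAddCircle)) j)
    {x : Fin k → ℝ | ∀ i, x i ∈ Set.Ioc ((0 : Fin k → ℝ) i) ((0 : Fin k → ℝ) i + 1)} hpos
  rw [hset, Module.finrank_fin_fun] at h
  have hproj :=
    (ContinuousLinearMap.proj (R := ℂ) (φ := fun _ : Fin m => ℂ) j).integral_comp_comm hint
  simp only [ContinuousLinearMap.proj_apply, Pi.smul_apply] at hproj
  rw [torusCoeff, Pi.smul_apply, ← hproj, ← h]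
  congr 1
  funext x
  have hx : (fun i => ((((2 * Real.pi) • x) i / (2 * Real.pi) : ℝ) : UnitAddCircle)) =
      fun i => (x i : UnitAddCircle) := by
    funext i
    simp only [Pi.smul_apply, smul_eq_mul]
    rw [mul_div_cancel_left₀ _ hpos.ne']
  rw [← hx, mFourier_scaled (-κ)]
  simp

/-- A continuous function on the torus with absolutely summable Fourier coefficients is the pointwise
sum of its Fourier series. -/
lemma hasSum_torusCoeff {k m : ℕ} (G : UnitAddTorus (Fin k) → Fin m → ℂ) (hG : Continuous G)
    (hs : Summable fun κ =>
      ‖torusCoeff (fun θ => G fun i => ((θ i / (2 * Real.pi) : ℝ) : UnitAddCircle)) κ‖)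
    (θ : Fin k → ℝ) :
    HasSum (fun κ : Fin k → ℤ => Complex.exp (Complex.I * (∑ i, (κ i : ℝ) * θ i)) •
      torusCoeff (fun θ => G fun i => ((θ i / (2 * Real.pi) : ℝ) : UnitAddCircle)) κ)
      (G fun i => ((θ i / (2 * Real.pi) : ℝ) : UnitAddCircle)) := by
  rw [Pi.hasSum]
  intro j
  let g : C(UnitAddTorus (Fin k), ℂ) := ⟨fun t => G t j, (continuous_apply j).comp hG⟩
  have hc : ∀ κ, torusCoeff
      (fun θ => G fun i => ((θ i / (2 * Real.pi) : ℝ) : UnitAddCircle)) κ j =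
      mFourierCoeff g κ := fun κ => torusCoeff_eq G hG κ j
  have hg : Summable (mFourierCoeff g) := by
    refine Summable.of_norm_bounded hs fun κ => ?_
    rw [← hc]
    exact norm_le_pi_norm _ j
  have := hasSum_mFourier_series_apply_of_summable hg
    (fun i => ((θ i / (2 * Real.pi) : ℝ) : UnitAddCircle))
  refine this.congr_fun fun κ => ?_
  rw [Pi.smul_apply, hc, mFourier_scaled, smul_eq_mul, smul_eq_mul, mul_comm]

/-- The operator `V (s - Λ)⁻¹ (B V)⁻¹` is a right inverse of `s B - A`. -/
lemma resolvent_identity {N : ℕ} (A B V : Matrix (Fin N) (Fin N) ℂ) (hB : IsUnit B)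
    (hV : IsUnit V) (Λ : Fin N → ℂ) (hgev : A * V = B * V * Matrix.diagonal Λ)
    (s : ℂ) (hs : ∀ j, s - Λ j ≠ 0) (x w : Fin N → ℂ)
    (hx : x = V.mulVec ((Matrix.diagonal fun j => 1 / (s - Λ j)).mulVec
      ((B * V)⁻¹.mulVec w))) :
    s • B.mulVec x = A.mulVec x + w := by
  have hBV : (B * V) * (B * V)⁻¹ = 1 :=
    Matrix.mul_nonsing_inv _ ((Matrix.isUnit_iff_isUnit_det _).1 (hB.mul hV))
  have hD : s • (1 : Matrix (Fin N) (Fin N) ℂ) * (Matrix.diagonal fun j => 1 / (s - Λ j)) =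
      Matrix.diagonal Λ * (Matrix.diagonal fun j => 1 / (s - Λ j)) + 1 := by
    rw [← Matrix.diagonal_one, ← Matrix.diagonal_smul, Matrix.diagonal_mul_diagonal,
      Matrix.diagonal_mul_diagonal, Matrix.diagonal_add]
    congr 1
    funext j
    have := hs j
    simp only [Pi.smul_apply, smul_eq_mul]
    field_simp
    ring
  have key : s • (B * V * (Matrix.diagonal fun j => 1 / (s - Λ j)) * (B * V)⁻¹) =
      A * V * (Matrix.diagonal fun j => 1 / (s - Λ j)) * (B * V)⁻¹ + 1 := by
    have := congrArg (fun M => B * V * M * (B * V)⁻¹) hD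
    simpa only [Matrix.smul_mul, Matrix.mul_smul, one_mul, mul_add, add_mul, mul_one, hBV,
      hgev, mul_assoc] using this
  have := congrArg (fun M => M.mulVec w) key
  simpa only [hx, Matrix.smul_mulVec, Matrix.add_mulVec, Matrix.one_mulVec, Matrix.mulVec_mulVec,
    mul_assoc] using this

/-- if `u : 𝕋^k → ℝ^{2n}` is continuous with absolutely summable Fourier
coefficients `u_κ`, if `Σ_κ |(R∘u)_κ| < ∞`, and if `u_κ = V H(T_κ)(BV)⁻¹(F_κ − (R∘u)_κ)` for
every `κ`, then `z(t) := u(Ωt)` is `C¹` and solves `B ż = A z − R(z) + F(t)` on `ℝ`. -/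
theorem stmt_10 {n k : ℕ} (A B : Matrix (Fin (2*n)) (Fin (2*n)) ℝ) (hB : IsUnit B)
    (V : Matrix (Fin (2*n)) (Fin (2*n)) ℂ) (hV : IsUnit V)
    (Λ : Fin (2*n) → ℂ)
    (hgev : A.map Complex.ofReal * V = B.map Complex.ofReal * V * Matrix.diagonal Λ)
    (hRe : ∀ j, (Λ j).re ≠ 0)
    (R : (Fin (2*n) → ℝ) → Fin (2*n) → ℝ) (K : NNReal) (hR : LipschitzWith K R)
    (Ω : Fin k → ℝ) (hΩ : ∀ κ : Fin k → ℤ, κ ≠ 0 → kdot κ Ω ≠ 0)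
    (Fc : (Fin k → ℤ) → Fin (2*n) → ℂ) (hFsum : Summable fun κ => ‖Fc κ‖)
    (F : ℝ → Fin (2*n) → ℝ)
    (hF : ∀ t, (fun i => (F t i : ℂ)) =
      ∑' κ : Fin k → ℤ, fun i => Fc κ i * Complex.exp (Complex.I * (kdot κ Ω) * t))
    (u : (Fin k → ℝ) → Fin (2*n) → ℝ) (hu : Continuous u)
    (uc : (Fin k → ℤ) → Fin (2*n) → ℂ) (husum : Summable fun κ => ‖uc κ‖)
    (hurep : ∀ θ : Fin k → ℝ, (fun i => (u θ i : ℂ)) =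
      ∑' κ : Fin k → ℤ, fun i => uc κ i * Complex.exp (Complex.I * (∑ i', (κ i' : ℝ) * θ i')))
    (hRsum : Summable fun κ => ‖torusCoeff (fun θ i => (R (u θ) i : ℂ)) κ‖)
    (hfix : ∀ κ : Fin k → ℤ,
      uc κ = V.mulVec ((Matrix.diagonal fun j =>
        1 / (Complex.I * (kdot κ Ω) - Λ j)).mulVec
          (((B.map Complex.ofReal * V)⁻¹).mulVec
            (Fc κ - torusCoeff (fun θ i => (R (u θ) i : ℂ)) κ)))) :
    ContDiff ℝ 1 (fun t : ℝ => u fun i => Ω i * t) ∧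
    ∀ t : ℝ,
      B.mulVec (deriv (fun t : ℝ => u fun i => Ω i * t) t) =
        A.mulVec (u fun i => Ω i * t) - R (u fun i => Ω i * t) + F t := by
  have hBdet : IsUnit B.det := (Matrix.isUnit_iff_isUnit_det B).1 hB
  set r := torusCoeff (fun θ i => (R (u θ) i : ℂ)) with hr
  set Bi : Matrix (Fin (2*n)) (Fin (2*n)) ℂ := B⁻¹.map Complex.ofReal with hBi
  have hBiB : Bi * B.map Complex.ofReal = 1 := by
    have h := congrArg (fun M : Matrix _ _ ℝ => M.map Complex.ofRealHom)
      (Matrix.nonsing_inv_mul B hBdet)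
    simp only [Matrix.map_mul] at h
    rwa [Matrix.map_one _ (map_zero _) (map_one _)] at h
  have hBc : IsUnit (B.map Complex.ofReal) := IsUnit.of_mul_eq_one_right _ hBiB
  have hmap : ∀ (M : Matrix (Fin (2*n)) (Fin (2*n)) ℝ) (x : Fin (2*n) → ℝ),
      (M.map Complex.ofReal).mulVec (fun i => (x i : ℂ)) = fun i => ((M.mulVec x i : ℝ) : ℂ) := by
    intro M x
    funext i
    simp [Matrix.mulVec, dotProduct]
  let e : (Fin k → ℤ) → ℝ → ℂ := fun κ t => Complex.exp (Complex.I * (kdot κ Ω) * t)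
  have he_norm : ∀ κ t, ‖e κ t‖ = 1 := by
    intro κ t
    have : Complex.I * (kdot κ Ω) * t = ((kdot κ Ω * t : ℝ) : ℂ) * Complex.I := by
      push_cast; ring
    simp only [e, this, Complex.norm_exp_ofReal_mul_I]
  have he_line : ∀ κ (t : ℝ),
      Complex.exp (Complex.I * (∑ i, (κ i : ℝ) * (Ω i * t) : ℝ)) = e κ t := by
    intro κ t
    simp only [e, kdot]
    congr 1
    push_cast
    rw [mul_assoc, Finset.sum_mul]
    simp only [mul_assoc]
  have he_sum : ∀ (c : (Fin k → ℤ) → Fin (2*n) → ℂ), (Summable fun κ => ‖c κ‖) →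
      ∀ t, Summable fun κ => e κ t • c κ := by
    intro c hc t
    refine Summable.of_norm_bounded hc fun κ => ?_
    rw [norm_smul, he_norm, one_mul]
  have hcoef : ∀ κ, (Complex.I * (kdot κ Ω)) • uc κ =
      Bi.mulVec ((A.map Complex.ofReal).mulVec (uc κ) + (Fc κ - r κ)) := by
    intro κ
    have hne : ∀ j, Complex.I * (kdot κ Ω) - Λ j ≠ 0 := by
      intro j h
      -- `iω` is purely imaginary while `Λ j` is not.
      apply hRe j
      have := congrArg Complex.re h
      simpa using this
    have h := resolvent_identity _ _ V hBc hV Λ hgev _ hne _ _ (hfix κ)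
    rw [← h, Matrix.mulVec_smul, Matrix.mulVec_mulVec, hBiB, Matrix.one_mulVec]
  let LA : (Fin (2*n) → ℂ) →L[ℂ] (Fin (2*n) → ℂ) :=
    (A.map Complex.ofReal).mulVecLin.toContinuousLinearMap
  let LB : (Fin (2*n) → ℂ) →L[ℂ] (Fin (2*n) → ℂ) := Bi.mulVecLin.toContinuousLinearMap
  -- By `hcoef` the coefficients `iω u_κ` are images of summable sequences under fixed matrices;
  -- no small-divisor estimate is needed.
  have hdsum : Summable fun κ => ‖(Complex.I * (kdot κ Ω)) • uc κ‖ := by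
    rw [summable_norm_iff]
    simp only [hcoef]
    exact LB.summable ((LA.summable husum.of_norm).add (hFsum.of_norm.sub hRsum.of_norm))
  let z : ℝ → Fin (2*n) → ℝ := fun t => u fun i => Ω i * t
  have hz : ∀ t, HasSum (fun κ => e κ t • uc κ) (fun i => (z t i : ℂ)) := by
    intro t
    have h := (he_sum uc husum t).hasSum
    convert h using 1
    simp only [z]
    rw [hurep]
    congr 1
    funext κ i
    rw [he_line, Pi.smul_apply, smul_eq_mul, mul_comm]
  have hFs : ∀ t, (fun i => (F t i : ℂ)) = ∑' κ, e κ t • Fc κ := by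
    intro t
    rw [hF]
    congr 1
    funext κ i
    rw [Pi.smul_apply, smul_eq_mul, mul_comm]
  have hFh : ∀ t, HasSum (fun κ => e κ t • Fc κ) (fun i => (F t i : ℂ)) := by
    intro t
    rw [hFs]
    exact (he_sum Fc hFsum t).hasSum
  -- `u`, being the sum of its Fourier series, factors through a continuous function `U` on the
  -- torus; hence so does `R ∘ u`, and Fourier inversion applies to it.
  have hRh : ∀ t, HasSum (fun κ => e κ t • r κ) (fun i => (R (z t) i : ℂ)) := by
    intro t
    let U : UnitAddTorus (Fin k) → Fin (2*n) → ℂ := fun x => ∑' κ, mFourier κ x • uc κ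
    have hU : Continuous U := by
      refine continuous_tsum (fun κ => (mFourier κ).continuous.smul continuous_const) husum
        fun κ x => ?_
      rw [norm_smul]
      refine mul_le_of_le_one_left (norm_nonneg _) ?_
      exact ((mFourier κ).norm_coe_le_norm x).trans mFourier_norm.le
    have hUu : ∀ θ : Fin k → ℝ,
        U (fun i => ((θ i / (2 * Real.pi) : ℝ) : UnitAddCircle)) = fun i => (u θ i : ℂ) := by
      intro θ
      rw [hurep]
      simp only [U, mFourier_scaled]
      congr 1
      funext κ i
      rw [Pi.smul_apply, smul_eq_mul, mul_comm]
    let G : UnitAddTorus (Fin k) → Fin (2*n) → ℂ :=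
      fun x i => (R (fun j => (U x j).re) i : ℂ)
    have hG : Continuous G := by
      have h1 : Continuous fun x => R (fun j => (U x j).re) :=
        hR.continuous.comp (continuous_pi fun j =>
          Complex.continuous_re.comp ((continuous_apply j).comp hU))
      exact continuous_pi fun i => Complex.continuous_ofReal.comp ((continuous_apply i).comp h1)
    have hGu : ∀ θ : Fin k → ℝ, G (fun i => ((θ i / (2 * Real.pi) : ℝ) : UnitAddCircle)) =
        fun i => (R (u θ) i : ℂ) := by
      intro θ
      simp only [G, hUu, Complex.ofReal_re]
    have h := hasSum_torusCoeff G hG (by simpa only [hGu] using hRsum) (fun i => Ω i * t)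
    simpa only [hGu, he_line] using h
  let D : ℝ → Fin (2*n) → ℝ := fun t => B⁻¹.mulVec (A.mulVec (z t) + (F t - R (z t)))
  have hD : ∀ t, HasSum (fun κ => e κ t • ((Complex.I * (kdot κ Ω)) • uc κ))
      (fun i => (D t i : ℂ)) := by
    intro t
    have h := LB.hasSum ((LA.hasSum (hz t)).add ((hFh t).sub (hRh t)))
    convert h using 1
    · funext κ
      rw [hcoef, ← smul_sub, map_smul, ← smul_add, map_smul]
      rfl
    · change _ = Bi.mulVec ((A.map Complex.ofReal).mulVec _ + _)
      rw [hmap]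
      have : ((fun i => ((A.mulVec (z t) i : ℝ) : ℂ)) +
          ((fun i => (F t i : ℂ)) - fun i => (R (z t) i : ℂ))) =
          fun i => (((A.mulVec (z t) + (F t - R (z t))) i : ℝ) : ℂ) := by
        funext i
        simp
      rw [this, hmap]
  have hderivC : ∀ t, HasDerivAt (fun t i => (z t i : ℂ)) (fun i => (D t i : ℂ)) t := by
    intro t
    have h := hasDerivAt_tsum (𝕜 := ℝ) (g := fun κ t => e κ t • uc κ)
      (g' := fun κ t => e κ t • ((Complex.I * (kdot κ Ω)) • uc κ)) (y₀ := 0) hdsum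
      (fun κ y => by
        have h1 : HasDerivAt (fun y : ℝ => Complex.I * (kdot κ Ω) * (y : ℂ))
            (Complex.I * (kdot κ Ω)) y := by
          simpa using (Complex.ofRealCLM.hasDerivAt (x := y)).const_mul (Complex.I * (kdot κ Ω))
        have h2 := h1.cexp.smul_const (uc κ)
        rwa [mul_smul] at h2)
      (fun κ y => by rw [norm_smul, he_norm, one_mul])
      (he_sum uc husum 0) t
    simpa only [(hz _).tsum_eq, (hD _).tsum_eq] using h
  have hderiv : ∀ t, HasDerivAt z (D t) t := by
    intro t
    rw [hasDerivAt_pi]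
    intro i
    have h := Complex.reCLM.hasFDerivAt.comp_hasDerivAt t (hasDerivAt_pi.1 (hderivC t) i)
    simpa [Function.comp_def] using h
  have hzc : Continuous z := continuous_iff_continuousAt.2 fun t => (hderiv t).continuousAt
  have hFcont : Continuous F := by
    have h : Continuous fun t => ∑' κ, e κ t • Fc κ := by
      refine continuous_tsum (fun κ => ?_) hFsum fun κ t => ?_
      · have : Continuous (e κ) := by simp only [e]; fun_prop
        exact this.smul continuous_const
      · rw [norm_smul, he_norm, one_mul]
    simp only [← hFs] at h
    refine continuous_pi fun i => ?_
    have := Complex.continuous_re.comp ((continuous_apply i).comp h)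
    simpa [Function.comp_def] using this
  have hDc : Continuous D :=
    Continuous.matrix_mulVec continuous_const
      ((Continuous.matrix_mulVec continuous_const hzc).add
        (hFcont.sub (hR.continuous.comp hzc)))
  have hderiv_eq : deriv z = D := funext fun t => (hderiv t).deriv
  refine ⟨?_, fun t => ?_⟩
  · change ContDiff ℝ 1 z
    rw [contDiff_one_iff_deriv]
    exact ⟨fun t => (hderiv t).differentiableAt, hderiv_eq ▸ hDc⟩
  · change B.mulVec (deriv z t) = A.mulVec (z t) - R (z t) + F t
    rw [hderiv_eq]
    simp only [D]
    rw [Matrix.mulVec_mulVec, Matrix.mul_nonsing_inv B hBdet, Matrix.one_mulVec]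
    abel
end

section
/- Let ω₀ > 0, 0 < ζ < 1, T > 0, and let ν ∈ ℝ satisfy e^{iνT} = 1 (i.e. ν = 2πm/T for some m ∈ ℤ). Then for every t ∈ [0, T], ∫_0^T L(t−s, T) e^{iνs} ds = e^{iνt} / ( (iν − α)² + ω_d² ). -/
/-!
With `l = α + i ω_d` and `m = α - i ω_d`, Euler's formula splits the Green's function as
`L(u, T) = (K_l(u) - K_m(u)) / (2 i ω_d)`, where
`K_l(u) = e^{l u} (e^{l T} / (1 - e^{l T}) + h(u))` is the `T`-periodic Green's function of the
first-order operator `d/dt - l` (`greenL_eq_kernel`). Cutting `[0, T]` at `s = t` and using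
`e^{iνT} = 1`, the convolution of `K_l` with `e^{iνs}` is `e^{iνt} / (iν - l)`
(`integral_firstOrderKernel`). The theorem is then the partial fraction identity
`(1 / (iν - l) - 1 / (iν - m)) / (2 i ω_d) = 1 / ((iν - l) (iν - m))`, whose right-hand
denominator is `(iν - α)² + ω_d²`.
-/

/-- The underdamped `T`-periodic Green's function `L(t, T)` with parameters `α < 0`, `ω_d > 0`. -/
noncomputable def greenL (α ωd T t : ℝ) : ℝ :=
  (Real.exp (α * t) / ωd) *
    (Real.exp (α * T) *
        (Real.sin (ωd * (T + t)) - Real.exp (α * T) * Real.sin (ωd * t)) /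
        (1 + Real.exp (2 * α * T) - 2 * Real.exp (α * T) * Real.cos (ωd * T)) +
      (if 0 ≤ t then 1 else 0) * Real.sin (ωd * t))

/-- The `T`-periodic Green's function of the first-order operator `d/dt - l` on `(-T, T)`. -/
noncomputable def firstOrderKernel (l : ℂ) (T u : ℝ) : ℂ :=
  Complex.exp (l * u) *
    (Complex.exp (l * T) / (1 - Complex.exp (l * T)) + (if 0 ≤ u then 1 else 0))

lemma one_sub_exp_ne_zero {l : ℂ} (hl : l.re < 0) {T : ℝ} (hT : 0 < T) :
    1 - Complex.exp (l * T) ≠ 0 := by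
  intro h
  have h1 : ‖Complex.exp (l * T)‖ = 1 := by
    rw [← sub_eq_zero.mp h, norm_one]
  rw [Complex.norm_exp, Complex.re_mul_ofReal, Real.exp_eq_one_iff] at h1
  nlinarith

lemma greenL_eq_kernel {α ωd T : ℝ} (hα : α < 0) (hω : ωd ≠ 0) (hT : 0 < T) (u : ℝ) :
    (greenL α ωd T u : ℂ) =
      (firstOrderKernel (α + Complex.I * ωd) T u - firstOrderKernel (α - Complex.I * ωd) T u) /
        (2 * Complex.I * ωd) := by
  have hp := one_sub_exp_ne_zero (l := α + Complex.I * ωd) (by simpa using hα) hT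
  have hm := one_sub_exp_ne_zero (l := α - Complex.I * ωd) (by simpa using hα) hT
  have hωc : (ωd : ℂ) ≠ 0 := by exact_mod_cast hω
  have hI := Complex.I_ne_zero
  have eI (x : ℝ) : Complex.exp (Complex.I * ωd * x) =
      Complex.cos (ωd * x) + Complex.sin (ωd * x) * Complex.I := by
    rw [← Complex.exp_mul_I]; ring_nf
  have eI' (x : ℝ) : Complex.exp (-(Complex.I * ωd * x)) =
      Complex.cos (ωd * x) - Complex.sin (ωd * x) * Complex.I := by
    rw [show -(Complex.I * ωd * x) = (-(ωd * x : ℂ)) * Complex.I by ring, Complex.exp_mul_I,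
      Complex.cos_neg, Complex.sin_neg]; ring
  have ep (x : ℝ) : Complex.exp ((α + Complex.I * ωd) * x) = Complex.exp (α * x) *
      (Complex.cos (ωd * x) + Complex.sin (ωd * x) * Complex.I) := by
    rw [← eI, ← Complex.exp_add]; ring_nf
  have em (x : ℝ) : Complex.exp ((α - Complex.I * ωd) * x) = Complex.exp (α * x) *
      (Complex.cos (ωd * x) - Complex.sin (ωd * x) * Complex.I) := by
    rw [← eI', ← Complex.exp_add]; ring_nf
  have h2 : Complex.exp (2 * α * T) = Complex.exp (α * T) ^ 2 := by
    rw [← Complex.exp_nat_mul]; push_cast; ring_nf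
  have hcs := Complex.sin_sq_add_cos_sq (ωd * T : ℂ)
  have hden : (1 + Complex.exp (α * T) ^ 2 - 2 * Complex.exp (α * T) * Complex.cos (ωd * T)) =
      (1 - Complex.exp ((α + Complex.I * ωd) * T)) *
        (1 - Complex.exp ((α - Complex.I * ωd) * T)) := by
    rw [ep, em]
    linear_combination (-Complex.exp (α * T) ^ 2) * hcs +
      Complex.exp (α * T) ^ 2 * Complex.sin (ωd * T) ^ 2 * Complex.I_sq
  unfold greenL firstOrderKernel
  push_cast
  rw [h2, hden, mul_add (ωd : ℂ), Complex.sin_add]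
  have hnum : 2 * Complex.I * (Complex.exp (α * u) * (Complex.exp (α * T) *
      (Complex.sin (ωd * T) * Complex.cos (ωd * u) + Complex.cos (ωd * T) * Complex.sin (ωd * u) -
        Complex.exp (α * T) * Complex.sin (ωd * u)))) =
      Complex.exp ((α + Complex.I * ωd) * u) * Complex.exp ((α + Complex.I * ωd) * T) *
          (1 - Complex.exp ((α - Complex.I * ωd) * T)) -
        Complex.exp ((α - Complex.I * ωd) * u) * Complex.exp ((α - Complex.I * ωd) * T) *
          (1 - Complex.exp ((α + Complex.I * ωd) * T)) := by
    simp only [ep, em]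
    linear_combination 2 * Complex.I * Complex.exp (α * u) * Complex.exp (α * T) ^ 2 *
      Complex.sin (ωd * u) * (hcs - Complex.sin (ωd * T) ^ 2 * Complex.I_sq)
  have hsin : 2 * Complex.I * (Complex.exp (α * u) * Complex.sin (ωd * u)) =
      Complex.exp ((α + Complex.I * ωd) * u) - Complex.exp ((α - Complex.I * ωd) * u) := by
    rw [ep, em]; ring
  -- Opaque atoms keep `field_simp` from rearranging the arguments of `exp`, `sin` and `cos`.
  clear ep em eI eI' hcs hden h2
  generalize Complex.exp ((α + Complex.I * ωd) * T) = P at *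
  generalize Complex.exp ((α - Complex.I * ωd) * T) = M at *
  generalize Complex.exp ((α + Complex.I * ωd) * u) = p at *
  generalize Complex.exp ((α - Complex.I * ωd) * u) = m at *
  generalize Complex.sin (ωd * u) = su at *
  generalize Complex.cos (ωd * u) = cu at *
  generalize Complex.sin (ωd * T) = sT at *
  generalize Complex.cos (ωd * T) = cT at *
  split_ifs <;>
  · field_simp
    push_cast
    first
    | linear_combination hnum + (1 - P) * (1 - M) * hsin
    | linear_combination hnum

/-- The two one-sided pieces of the convolution integral combine because
`e^{(iν - l) T} = e^{-l T}`. -/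
lemma integral_firstOrderKernel {l : ℂ} (hl : l.re < 0) {T : ℝ} (hT : 0 < T) {ν : ℝ}
    (hν : Complex.exp (Complex.I * ν * T) = 1) {t : ℝ} (ht : t ∈ Set.Icc (0 : ℝ) T) :
    IntervalIntegrable (fun s : ℝ => firstOrderKernel l T (t - s) *
      Complex.exp (Complex.I * ν * s)) MeasureTheory.volume 0 T ∧
    ∫ s in (0 : ℝ)..T, firstOrderKernel l T (t - s) * Complex.exp (Complex.I * ν * s) =
      Complex.exp (Complex.I * ν * t) / (Complex.I * ν - l) := by
  have hE := one_sub_exp_ne_zero hl hT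
  have hk : Complex.I * ν - l ≠ 0 := by
    intro h
    have := congrArg Complex.re h
    simp at this
    linarith
  set k : ℂ := Complex.I * ν - l with hkdef
  set E := Complex.exp (l * T) with hEdef
  have hexp (s : ℝ) : Complex.exp (l * (t - s : ℝ)) * Complex.exp (Complex.I * ν * s) =
      Complex.exp (l * t) * Complex.exp (k * s) := by
    rw [← Complex.exp_add, ← Complex.exp_add, hkdef]; push_cast; ring_nf
  have h1 : Set.EqOn (fun s : ℝ => Complex.exp (l * t) / (1 - E) * Complex.exp (k * s))
      (fun s : ℝ => firstOrderKernel l T (t - s) * Complex.exp (Complex.I * ν * s))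
      (Set.uIoc 0 t) := by
    intro s hs
    rw [Set.uIoc_of_le ht.1] at hs
    simp only [firstOrderKernel]
    rw [if_pos (by linarith [hs.2]), mul_right_comm, hexp]
    rw [← hEdef]
    field_simp
    ring
  have h2 : Set.EqOn (fun s : ℝ => Complex.exp (l * t) * E / (1 - E) * Complex.exp (k * s))
      (fun s : ℝ => firstOrderKernel l T (t - s) * Complex.exp (Complex.I * ν * s))
      (Set.uIoc t T) := by
    intro s hs
    rw [Set.uIoc_of_le ht.2] at hs
    simp only [firstOrderKernel]
    rw [if_neg (by linarith [hs.1]), mul_right_comm, hexp, ← hEdef]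
    ring
  have i1 : IntervalIntegrable (fun s : ℝ => firstOrderKernel l T (t - s) *
      Complex.exp (Complex.I * ν * s)) MeasureTheory.volume 0 t :=
    (Continuous.intervalIntegrable (by fun_prop) _ _).congr h1
  have i2 : IntervalIntegrable (fun s : ℝ => firstOrderKernel l T (t - s) *
      Complex.exp (Complex.I * ν * s)) MeasureTheory.volume t T :=
    (Continuous.intervalIntegrable (by fun_prop) _ _).congr h2
  refine ⟨i1.trans i2, ?_⟩
  rw [← intervalIntegral.integral_add_adjacent_intervals i1 i2,
    ← intervalIntegral.integral_congr_ae (.of_forall h1), ← intervalIntegral.integral_congr_ae (.of_forall h2),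
    intervalIntegral.integral_const_mul, intervalIntegral.integral_const_mul,
    integral_exp_mul_complex hk, integral_exp_mul_complex hk]
  have hkT : E * Complex.exp (k * T) = 1 := by
    rw [hEdef, ← Complex.exp_add, ← hν, hkdef]; ring_nf
  have hkt : Complex.exp (Complex.I * ν * t) = Complex.exp (l * t) * Complex.exp (k * t) := by
    rw [← Complex.exp_add, hkdef]; ring_nf
  rw [hkt]
  simp only [Complex.ofReal_zero, mul_zero, Complex.exp_zero]
  field_simp
  linear_combination hkT

/-- for `ω₀ > 0`, `0 < ζ < 1`, `T > 0`, `ν ∈ ℝ` with `e^{iνT} = 1`, and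
`t ∈ [0, T]`, one has `∫_0^T L(t−s, T) e^{iνs} ds = e^{iνt}/((iν − α)² + ω_d²)`. -/
theorem stmt_14 (ω₀ ζ T : ℝ) (hω₀ : 0 < ω₀) (hζ0 : 0 < ζ) (hζ1 : ζ < 1) (hT : 0 < T)
    (ν : ℝ) (hν : Complex.exp (Complex.I * ν * T) = 1) :
    let α : ℝ := -ζ * ω₀
    let ωd : ℝ := ω₀ * Real.sqrt (1 - ζ ^ 2)
    ∀ t ∈ Set.Icc (0:ℝ) T,
      (∫ s in (0:ℝ)..T, (greenL α ωd T (t - s) : ℂ) * Complex.exp (Complex.I * ν * s)) =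
        Complex.exp (Complex.I * ν * t) /
          ((Complex.I * ν - (α : ℂ)) ^ 2 + (ωd : ℂ) ^ 2) := by
  intro α ωd t ht
  have hα : α < 0 := by simp only [α]; nlinarith
  have hω : ωd ≠ 0 :=
    (mul_pos hω₀ (Real.sqrt_pos.mpr (by nlinarith))).ne'
  have hωc : (ωd : ℂ) ≠ 0 := by exact_mod_cast hω
  obtain ⟨ip, ep⟩ := integral_firstOrderKernel (l := α + Complex.I * ωd) (by simpa using hα)
    hT hν ht
  obtain ⟨im, em⟩ := integral_firstOrderKernel (l := α - Complex.I * ωd) (by simpa using hα)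
    hT hν ht
  have hkp : Complex.I * ν - (α + Complex.I * ωd) ≠ 0 := by
    intro h
    have := congrArg Complex.re h
    simp at this
    linarith
  have hkm : Complex.I * ν - (α - Complex.I * ωd) ≠ 0 := by
    intro h
    have := congrArg Complex.re h
    simp at this
    linarith
  have hden : (Complex.I * ν - (α : ℂ)) ^ 2 + (ωd : ℂ) ^ 2 =
      (Complex.I * ν - (α + Complex.I * ωd)) * (Complex.I * ν - (α - Complex.I * ωd)) := by
    linear_combination (ωd : ℂ) ^ 2 * Complex.I_sq
  have hI := Complex.I_ne_zero
  simp only [greenL_eq_kernel hα hω hT, div_mul_eq_mul_div, sub_mul]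
  rw [intervalIntegral.integral_div, intervalIntegral.integral_sub ip im, ep, em, hden,
    div_sub_div _ _ hkp hkm, div_div, div_eq_div_iff (by simp [hkp, hkm, hωc]) (mul_ne_zero hkp hkm)]
  ring
end

section
/- Assume Re λ_j ≠ 0 for every j = 1,…,2n, set h_max := 1/min_j |Re λ_j|, and let R : ℝ^{2n} → ℝ^{2n} be globally Lipschitz with constant L. Note that i⟨κ,Ω⟩B − A is invertible for every κ ∈ ℤ^k and V H(T_κ)(BV)^{−1} = (i⟨κ,Ω⟩B − A)^{−1}. Let F ∈ L²(𝕋^k; ℝ^{2n}) with Fourier coefficients F_κ, and define the Picard map 𝒢_Q : L²(𝕋^k; ℝ^{2n}) → L²(𝕋^k; ℝ^{2n}) as the unique map such that the Fourier coefficients of 𝒢_Q(u) are (𝒢_Q u)_κ = V H(T_κ)(BV)^{−1}( F_κ − (R∘u)_κ ) for all κ. If ‖V‖ ‖(BV)^{−1}‖ L h_max < 1, then 𝒢_Q is a contraction on L²(𝕋^k; ℝ^{2n}) with contraction constant ‖V‖ ‖(BV)^{−1}‖ L h_max, it has a unique fixed point u*, and for every initial guess u₀ the iterates u_{ℓ+1}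 := 𝒢_Q(u_ℓ) converge to u* in L². -/
/-!
The forcing `F` cancels in `𝒢_Q u - 𝒢_Q v`, whose Fourier coefficients are therefore
`V H(T_κ) (BV)⁻¹ ((R∘v)_κ - (R∘u)_κ)`. As `i⟨κ,Ω⟩` is purely imaginary,
`|H_j(T_κ)| ≤ 1/|Re λ_j| ≤ h_max` uniformly in `κ`, so each coefficient is bounded by
`‖V‖ h_max ‖(BV)⁻¹‖` times the corresponding coefficient of `R∘v - R∘u`. Parseval's identity
(`vector_parseval`) and the Lipschitz bound on `R` turn this into the contraction estimate
(`dist_le_of_coeff_le`), and Banach's fixed point theorem gives the rest.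

Mathlib has Parseval's identity on the torus `(ℝ/ℤ)^k` with its Haar probability measure; it is
transported to `(ℝ/2πℤ)^k` with Lebesgue measure along the rescaling `torusScale`. The
resolvent formula is the algebraic identity `pencil_mul_eq_one`.
-/


open MeasureTheory

instance : Fact (0 < 2 * Real.pi) := ⟨by positivity⟩

/-- The `k`-dimensional torus, each factor a circle of circumference `2π`. -/
abbrev Torus (k : ℕ) := Fin k → AddCircle (2 * Real.pi)

/-- The `κ`-th Fourier coefficient `(2π)^{−k} ∫_{𝕋^k} g(θ) e^{−i⟨κ,θ⟩} dθ` of an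
`ℝ^m`-valued function on the `k`-torus. -/
noncomputable def torusCoeff2 {k m : ℕ} (g : Torus k → EuclideanSpace ℝ (Fin m))
    (κ : Fin k → ℤ) : Fin m → ℂ :=
  ((2 * Real.pi) ^ k)⁻¹ •
    ∫ θ : Torus k, (∏ i, fourier (-(κ i)) (θ i)) • fun j => ((g θ j : ℝ) : ℂ)

/-- The operator norm of a complex matrix induced by the Euclidean norm. -/
noncomputable def matOpNorm {m : ℕ} (M : Matrix (Fin m) (Fin m) ℂ) : ℝ :=
  ‖Matrix.toEuclideanCLM (𝕜 := ℂ) M‖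

/-- The coordinatewise rescaling of the unit torus `(ℝ/ℤ)^k` onto `(ℝ/2πℤ)^k`. -/
noncomputable def torusScale (k : ℕ) : (Fin k → AddCircle (1 : ℝ)) ≃ₜ Torus k :=
  Homeomorph.piCongrRight fun _ =>
    AddCircle.homeomorphAddCircle 1 (2 * Real.pi) one_ne_zero (by positivity)

/-- The rescaling `ℝ/ℤ → ℝ/2πℤ` carries Fourier monomials to Fourier monomials. -/
lemma fourier_circleScale (m : ℤ) (x : AddCircle (1 : ℝ)) :
    fourier m (AddCircle.homeomorphAddCircle 1 (2 * Real.pi) one_ne_zero (by positivity) x)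
      = fourier m x := by
  induction x using QuotientAddGroup.induction_on with
  | H x =>
    erw [AddCircle.homeomorphAddCircle_apply_mk]
    rw [fourier_coe_apply, fourier_coe_apply]
    congr 1
    have : (Real.pi : ℂ) ≠ 0 := by exact_mod_cast Real.pi_ne_zero
    push_cast
    field_simp

/-- The rescaling is an isomorphism of topological groups, so it carries the Haar probability
measure to a Haar probability measure, and that is unique. -/
lemma measurePreserving_circleScale :
    MeasurePreserving (AddCircle.homeomorphAddCircle 1 (2 * Real.pi) one_ne_zero (by positivity))
      (AddCircle.haarAddCircle (T := (1 : ℝ))) (AddCircle.haarAddCircle (T := 2 * Real.pi)) := by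
  let e := AddCircle.homeomorphAddCircle 1 (2 * Real.pi) one_ne_zero (by positivity)
  refine ⟨e.continuous.measurable, ?_⟩
  have h1 : (Measure.map e (AddCircle.haarAddCircle (T := (1 : ℝ)))).IsAddHaarMeasure :=
    (AddCircle.equivAddCircle 1 (2 * Real.pi) one_ne_zero (by positivity)).isAddHaarMeasure_map _
      e.continuous e.symm.continuous
  have h2 : IsProbabilityMeasure (Measure.map e (AddCircle.haarAddCircle (T := (1 : ℝ)))) :=
    Measure.isProbabilityMeasure_map e.continuous.aemeasurable
  exact Measure.isAddHaarMeasure_eq_of_isProbabilityMeasure _ _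

lemma pi_haar_eq (k : ℕ) :
    (Measure.pi fun _ : Fin k => AddCircle.haarAddCircle (T := 2 * Real.pi)) =
      (ENNReal.ofReal ((2 * Real.pi) ^ k))⁻¹ • (volume : Measure (Torus k)) := by
  have h2 : ENNReal.ofReal (2 * Real.pi) ≠ 0 := by simp [Real.pi_pos]
  refine Measure.pi_eq fun s _ => ?_
  rw [Measure.smul_apply, volume_pi_pi, AddCircle.volume_eq_smul_haarAddCircle]
  simp only [Measure.smul_apply, smul_eq_mul, Finset.prod_mul_distrib, Finset.prod_const,
    Finset.card_univ, Fintype.card_fin]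
  rw [ENNReal.ofReal_pow (by positivity), ← mul_assoc, ENNReal.inv_mul_cancel, one_mul]
  · exact pow_ne_zero _ h2
  · exact ENNReal.pow_ne_top ENNReal.ofReal_ne_top

lemma measurePreserving_torusScale (k : ℕ) :
    MeasurePreserving (torusScale k)
      (Measure.pi fun _ : Fin k => AddCircle.haarAddCircle (T := (1 : ℝ)))
      ((ENNReal.ofReal ((2 * Real.pi) ^ k))⁻¹ • (volume : Measure (Torus k))) := by
  rw [← pi_haar_eq]
  exact measurePreserving_pi _ _ fun _ => measurePreserving_circleScale

/-- Parseval's identity on `(ℝ/2πℤ)^k`, transported from the unit torus. -/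
lemma scalar_parseval {k : ℕ} {f : Torus k → ℂ} (hf : MemLp f 2 volume) :
    HasSum (fun κ : Fin k → ℤ =>
      ‖((2 * Real.pi) ^ k)⁻¹ • ∫ θ : Torus k, (∏ i, fourier (-(κ i)) (θ i)) • f θ‖ ^ 2)
      (((2 * Real.pi) ^ k)⁻¹ * ∫ θ, ‖f θ‖ ^ 2) := by
  have hE := measurePreserving_torusScale k
  have hemb : MeasurableEmbedding (torusScale k) := (torusScale k).measurableEmbedding
  have hc : ((ENNReal.ofReal ((2 * Real.pi) ^ k))⁻¹).toReal = ((2 * Real.pi) ^ k)⁻¹ := by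
    rw [ENNReal.toReal_inv, ENNReal.toReal_ofReal (by positivity)]
  have hf' : MemLp (f ∘ torusScale k) 2
      (Measure.pi fun _ : Fin k => AddCircle.haarAddCircle (T := (1 : ℝ))) :=
    (hf.smul_measure (by simp; positivity)).comp_measurePreserving hE
  have key := UnitAddTorus.hasSum_sq_mFourierCoeff (d := Fin k) (hf'.toLp _)
  have hae := hf'.coeFn_toLp
  have hcoef : ∀ κ : Fin k → ℤ, UnitAddTorus.mFourierCoeff (hf'.toLp _) κ =
      ((2 * Real.pi) ^ k)⁻¹ • ∫ θ : Torus k, (∏ i, fourier (-(κ i)) (θ i)) • f θ := by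
    intro κ
    rw [← hc, ← integral_smul_measure, ← hE.integral_comp hemb]
    refine integral_congr_ae ?_
    filter_upwards [hae] with t ht
    rw [ht]
    have hmono : UnitAddTorus.mFourier (-κ) t =
        ∏ i, fourier (-(κ i)) (torusScale k t i) := by
      rw [UnitAddTorus.mFourier, ContinuousMap.coe_mk]
      exact Finset.prod_congr rfl fun i _ => (fourier_circleScale (-κ i) (t i)).symm
    rw [hmono, Function.comp_apply]
  have hnorm :
      ∫ θ, ‖f θ‖ ^ 2
        ∂((ENNReal.ofReal ((2 * Real.pi) ^ k))⁻¹ • (volume : Measure (Torus k))) =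
      ((2 * Real.pi) ^ k)⁻¹ * ∫ θ, ‖f θ‖ ^ 2 := by
    rw [integral_smul_measure, hc, smul_eq_mul]
  simp only [hcoef] at key
  rw [← hnorm, ← hE.integral_comp hemb]
  convert key using 1
  refine integral_congr_ae ?_
  filter_upwards [hae] with t ht
  rw [ht]; rfl

lemma integrable_coord {k m : ℕ} {g : Torus k → EuclideanSpace ℝ (Fin m)}
    (hg : MemLp g 2 volume) (κ : Fin k → ℤ) (j : Fin m) :
    Integrable fun θ : Torus k => (∏ i, fourier (-(κ i)) (θ i)) • ((g θ j : ℝ) : ℂ) := by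
  have h1 : Integrable (fun θ => ((g θ j : ℝ) : ℂ)) :=
    ((EuclideanSpace.proj (𝕜 := ℝ) j).integrable_comp (hg.integrable (by norm_num))).ofReal
  have hcont : Continuous fun θ : Torus k => ∏ i, fourier (-(κ i)) (θ i) := by fun_prop
  refine h1.mono (hcont.aestronglyMeasurable.smul h1.1) (ae_of_all _ fun θ => ?_)
  have hone : ‖∏ i, fourier (-(κ i)) (θ i)‖ = 1 := by
    rw [norm_prod]
    exact Finset.prod_eq_one fun i _ => Circle.norm_coe _
  rw [norm_smul, hone, one_mul]

lemma torusCoeff2_apply {k m : ℕ} {g : Torus k → EuclideanSpace ℝ (Fin m)}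
    (hg : MemLp g 2 volume) (κ : Fin k → ℤ) (j : Fin m) :
    torusCoeff2 g κ j = ((2 * Real.pi) ^ k)⁻¹ •
      ∫ θ : Torus k, (∏ i, fourier (-(κ i)) (θ i)) • ((g θ j : ℝ) : ℂ) := by
  exact congrArg (((2 * Real.pi) ^ k)⁻¹ • ·) (eval_integral (fun j => integrable_coord hg κ j) j)

lemma torusCoeff2_sub {k m : ℕ} {g h : Torus k → EuclideanSpace ℝ (Fin m)}
    (hg : MemLp g 2 volume) (hh : MemLp h 2 volume) (κ : Fin k → ℤ) :
    torusCoeff2 (g - h) κ = torusCoeff2 g κ - torusCoeff2 h κ := by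
  ext j
  rw [Pi.sub_apply, torusCoeff2_apply hg, torusCoeff2_apply hh, torusCoeff2_apply (hg.sub hh),
    ← smul_sub, ← integral_sub (integrable_coord hg κ j) (integrable_coord hh κ j)]
  simp [mul_sub]

/-- Parseval's identity for `ℝ^m`-valued functions, with Euclidean norms on both sides. -/
lemma vector_parseval {k m : ℕ} {g : Torus k → EuclideanSpace ℝ (Fin m)}
    (hg : MemLp g 2 volume) :
    HasSum (fun κ : Fin k → ℤ => ‖WithLp.toLp 2 (torusCoeff2 g κ)‖ ^ 2)
      (((2 * Real.pi) ^ k)⁻¹ * ∫ θ, ‖g θ‖ ^ 2) := by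
  have hj : ∀ j, MemLp (fun θ => ((g θ j : ℝ) : ℂ)) 2 volume := fun j =>
    ((EuclideanSpace.proj (𝕜 := ℝ) j).comp_memLp' hg).ofReal
  simp only [EuclideanSpace.norm_sq_eq, torusCoeff2_apply hg]
  rw [integral_finsetSum, Finset.mul_sum]
  · refine hasSum_sum fun j _ => ?_
    simpa using scalar_parseval (hj j)
  · intro j _
    simpa using (hj j).integrable_norm_pow (by norm_num)

lemma Lp_norm_sq {k m : ℕ}
    (f : Lp (E := EuclideanSpace ℝ (Fin m)) 2 (volume : Measure (Torus k))) :
    ‖f‖ ^ 2 = ∫ θ, ‖f θ‖ ^ 2 := by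
  rw [← real_inner_self_eq_norm_sq, L2.inner_def]
  simp only [real_inner_self_eq_norm_sq]

lemma norm_mulVec_le {m : ℕ} (M : Matrix (Fin m) (Fin m) ℂ) (x : Fin m → ℂ) :
    ‖WithLp.toLp 2 (M.mulVec x)‖ ≤ matOpNorm M * ‖WithLp.toLp 2 x‖ := by
  rw [← Matrix.toEuclideanCLM_toLp]
  exact ContinuousLinearMap.le_opNorm _ _

lemma norm_diagonal_mulVec_le {m : ℕ} {d : Fin m → ℂ} {C : ℝ} (hC : 0 ≤ C)
    (hd : ∀ j, ‖d j‖ ≤ C) (x : Fin m → ℂ) :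
    ‖WithLp.toLp 2 ((Matrix.diagonal d).mulVec x)‖ ≤ C * ‖WithLp.toLp 2 x‖ := by
  refine le_of_sq_le_sq ?_ (by positivity)
  rw [mul_pow, EuclideanSpace.norm_sq_eq, EuclideanSpace.norm_sq_eq, Finset.mul_sum]
  refine Finset.sum_le_sum fun j _ => ?_
  simp only [Matrix.mulVec_diagonal, norm_mul, mul_pow]
  gcongr
  exact hd j

/-- A bound of the Fourier coefficients of `p - q` by `C` times those of `R ∘ u - R ∘ v` passes,
by Parseval and the Lipschitz bound on `R`, to `L²` distances. -/
lemma dist_le_of_coeff_le {k m : ℕ}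
    {u v p q : Lp (E := EuclideanSpace ℝ (Fin m)) 2 (volume : Measure (Torus k))}
    {R : EuclideanSpace ℝ (Fin m) → EuclideanSpace ℝ (Fin m)} {L : NNReal}
    (hR : LipschitzWith L R) {C : ℝ} (hC : 0 ≤ C)
    (h : ∀ κ, ‖WithLp.toLp 2 (torusCoeff2 (fun θ => p θ) κ - torusCoeff2 (fun θ => q θ) κ)‖ ≤
      C * ‖WithLp.toLp 2 (torusCoeff2 (fun θ => R (u θ)) κ - torusCoeff2 (fun θ => R (v θ)) κ)‖) :
    dist p q ≤ C * L * dist u v := by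
  have hRmem : ∀ w : Lp (E := EuclideanSpace ℝ (Fin m)) 2 (volume : Measure (Torus k)),
      MemLp (fun θ => R (w θ)) 2 volume := by
    intro w
    -- `R 0` need not vanish, but constants are in `L²` because the torus has finite measure.
    have h0 : LipschitzWith L fun x => R x - R 0 := by
      simpa using hR.sub (LipschitzWith.const (R 0))
    have := (h0.comp_memLp (by simp) (Lp.memLp w)).add (memLp_const (R 0))
    refine this.congr_norm ?_ (ae_of_all _ fun θ => by simp)
    exact hR.continuous.comp_aestronglyMeasurable (Lp.aestronglyMeasurable w)
  have hp := vector_parseval ((Lp.memLp p).sub (Lp.memLp q))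
  have hr := vector_parseval ((hRmem u).sub (hRmem v))
  have hle := hasSum_le (fun κ => ?_) hp (hr.mul_left (C ^ 2))
  swap
  · rw [torusCoeff2_sub (Lp.memLp p) (Lp.memLp q), torusCoeff2_sub (hRmem u) (hRmem v), ← mul_pow]
    exact pow_le_pow_left₀ (norm_nonneg _) (h κ) 2
  have hpq : ∫ θ, ‖((p : Torus k → _) - q) θ‖ ^ 2 = dist p q ^ 2 := by
    rw [dist_eq_norm, Lp_norm_sq]
    refine integral_congr_ae ?_
    filter_upwards [Lp.coeFn_sub p q] with θ hθ
    rw [hθ]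
  have huv : ∫ θ, ‖((fun θ => R (u θ)) - fun θ => R (v θ)) θ‖ ^ 2 ≤ L ^ 2 * dist u v ^ 2 := by
    rw [dist_eq_norm, Lp_norm_sq, ← integral_const_mul]
    refine integral_mono_ae (((hRmem u).sub (hRmem v)).integrable_norm_pow (by norm_num))
      (((Lp.memLp (u - v)).integrable_norm_pow (by norm_num)).const_mul _) ?_
    filter_upwards [Lp.coeFn_sub u v] with θ hθ
    rw [hθ, ← mul_pow]
    exact pow_le_pow_left₀ (norm_nonneg _) (hR.norm_sub_le _ _) 2
  rw [hpq, mul_left_comm] at hle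
  have hle' := le_of_mul_le_mul_left hle (by positivity)
  refine le_of_sq_le_sq ?_ (by positivity)
  calc dist p q ^ 2 ≤ _ := hle'
    _ ≤ C ^ 2 * (L ^ 2 * dist u v ^ 2) := by gcongr
    _ = _ := by ring

/-- In the eigenbasis `z B - A` becomes `B V diag(z - Λ) V⁻¹`, which gives an explicit right
inverse of the pencil when `z` is not an eigenvalue. -/
lemma pencil_mul_eq_one {m : ℕ} {A B V : Matrix (Fin m) (Fin m) ℂ} {Λ : Fin m → ℂ}
    (hBV : IsUnit (B * V)) (hgev : A * V = B * V * Matrix.diagonal Λ) {z : ℂ}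
    (hz : ∀ j, z - Λ j ≠ 0) :
    (z • B - A) * (V * (Matrix.diagonal fun j => 1 / (z - Λ j)) * (B * V)⁻¹) = 1 := by
  have h1 : (z • B - A) * V = B * V * Matrix.diagonal fun j => z - Λ j := by
    rw [sub_mul, hgev, ← Matrix.diagonal_sub, mul_sub, smul_mul_assoc]
    congr 1
    ext i j
    simp [Matrix.mul_diagonal, mul_comm]
  have h2 : (Matrix.diagonal fun j => z - Λ j) * (Matrix.diagonal fun j => 1 / (z - Λ j)) = 1 := by
    rw [Matrix.diagonal_mul_diagonal, ← Matrix.diagonal_one]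
    congr 1
    ext j
    exact mul_one_div_cancel (hz j)
  rw [← mul_assoc, ← mul_assoc, h1, mul_assoc (B * V), h2, mul_one]
  exact Matrix.mul_nonsing_inv _ ((Matrix.isUnit_iff_isUnit_det _).mp hBV)

/-- the quasi-periodic Picard map `𝒢_Q` on `L²(𝕋^k; ℝ^{2n})`, characterized on
Fourier coefficients by `(𝒢_Q u)_κ = V H(T_κ)(BV)⁻¹ (F_κ − (R∘u)_κ)`, is a contraction with
constant `‖V‖‖(BV)⁻¹‖ L h_max` provided this constant is `< 1`; moreover
`i⟨κ,Ω⟩B − A` is invertible with `V H(T_κ)(BV)⁻¹ = (i⟨κ,Ω⟩B − A)⁻¹`, `𝒢_Q` has a unique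
fixed point `u*`, and the iterates from any `u₀` converge to `u*` in `L²`. -/
theorem stmt_18 {n k : ℕ} (hn : 0 < n)
    (A B : Matrix (Fin (2*n)) (Fin (2*n)) ℝ) (hB : IsUnit B)
    (V : Matrix (Fin (2*n)) (Fin (2*n)) ℂ) (hV : IsUnit V)
    (Λ : Fin (2*n) → ℂ)
    (hgev : A.map Complex.ofReal * V = B.map Complex.ofReal * V * Matrix.diagonal Λ)
    (hRe : ∀ j, (Λ j).re ≠ 0)
    (Ω : Fin k → ℝ) (hΩ : ∀ κ : Fin k → ℤ, κ ≠ 0 → kdot κ Ω ≠ 0)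
    (R : EuclideanSpace ℝ (Fin (2*n)) → EuclideanSpace ℝ (Fin (2*n)))
    (L : NNReal) (hR : LipschitzWith L R)
    (F : Lp (E := EuclideanSpace ℝ (Fin (2*n))) 2 (volume : Measure (Torus k)))
    (GQ : Lp (E := EuclideanSpace ℝ (Fin (2*n))) 2 (volume : Measure (Torus k)) →
      Lp (E := EuclideanSpace ℝ (Fin (2*n))) 2 (volume : Measure (Torus k)))
    (hGQ : ∀ u (κ : Fin k → ℤ),
      torusCoeff2 (fun θ => GQ u θ) κ =
        V.mulVec ((Matrix.diagonal fun j =>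
          1 / (Complex.I * (kdot κ Ω) - Λ j)).mulVec
            (((B.map Complex.ofReal * V)⁻¹).mulVec
              (torusCoeff2 (fun θ => F θ) κ - torusCoeff2 (fun θ => R (u θ)) κ)))) :
    let hmax : ℝ := 1 / Finset.univ.inf' (Finset.univ_nonempty_iff.mpr ⟨⟨0, by omega⟩⟩)
      fun j : Fin (2*n) => |(Λ j).re|
    (∀ κ : Fin k → ℤ,
      IsUnit ((Complex.I * (kdot κ Ω)) • B.map Complex.ofReal - A.map Complex.ofReal) ∧
      V * (Matrix.diagonal fun j => 1 / (Complex.I * (kdot κ Ω) - Λ j)) *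
          (B.map Complex.ofReal * V)⁻¹ =
        ((Complex.I * (kdot κ Ω)) • B.map Complex.ofReal - A.map Complex.ofReal)⁻¹) ∧
    (matOpNorm V * matOpNorm ((B.map Complex.ofReal * V)⁻¹) * L * hmax < 1 →
      (∀ u v, dist (GQ u) (GQ v) ≤
        matOpNorm V * matOpNorm ((B.map Complex.ofReal * V)⁻¹) * L * hmax * dist u v) ∧
      ∃ us, GQ us = us ∧ (∀ w, GQ w = w → w = us) ∧
        ∀ u₀, Filter.Tendsto (fun ℓ : ℕ => GQ^[ℓ] u₀) Filter.atTop (nhds us)) := by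
  intro hmax
  have hBV : IsUnit (B.map Complex.ofReal * V) := (hB.map Complex.ofRealHom.mapMatrix).mul hV
  -- `i⟨κ,Ω⟩` is purely imaginary, so the distance to `Λ j` is at least `|Re (Λ j)|`.
  have hre : ∀ (κ : Fin k → ℤ) j, |(Λ j).re| ≤ ‖Complex.I * (kdot κ Ω) - Λ j‖ := by
    intro κ j
    simpa using Complex.abs_re_le_norm (Complex.I * (kdot κ Ω) - Λ j)
  have hz : ∀ (κ : Fin k → ℤ) j, Complex.I * (kdot κ Ω) - Λ j ≠ 0 := fun κ j =>
    norm_pos_iff.mp ((abs_pos.mpr (hRe j)).trans_le (hre κ j))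
  have hmin : 0 < Finset.univ.inf' (Finset.univ_nonempty_iff.mpr ⟨⟨0, by omega⟩⟩)
      fun j : Fin (2*n) => |(Λ j).re| := by
    rw [Finset.lt_inf'_iff]
    exact fun j _ => abs_pos.mpr (hRe j)
  have hmax0 : 0 ≤ hmax := (one_div_pos.mpr hmin).le
  have hH : ∀ (κ : Fin k → ℤ) j, ‖1 / (Complex.I * (kdot κ Ω) - Λ j)‖ ≤ hmax := by
    intro κ j
    rw [norm_div, norm_one]
    exact one_div_le_one_div_of_le hmin
      ((Finset.inf'_le _ (Finset.mem_univ j)).trans (hre κ j))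
  have hV0 : 0 ≤ matOpNorm V := norm_nonneg _
  have hW0 : 0 ≤ matOpNorm ((B.map Complex.ofReal * V)⁻¹) := norm_nonneg _
  refine ⟨fun κ => ?_, fun hlt => ?_⟩
  · have h := pencil_mul_eq_one hBV hgev (hz κ)
    exact ⟨IsUnit.of_mul_eq_one _ h, (Matrix.inv_eq_right_inv h).symm⟩
  have hdist : ∀ u v, dist (GQ u) (GQ v) ≤
      matOpNorm V * matOpNorm ((B.map Complex.ofReal * V)⁻¹) * L * hmax * dist u v := by
    intro u v
    -- The sign in `F_κ - (R ∘ u)_κ` swaps the roles of `u` and `v`.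
    have := dist_le_of_coeff_le (u := v) (v := u) (p := GQ u) (q := GQ v) hR
      (C := matOpNorm V * (hmax * matOpNorm ((B.map Complex.ofReal * V)⁻¹))) (by positivity) ?_
    · rw [dist_comm v u] at this
      exact this.trans_eq (by ring)
    intro κ
    rw [hGQ u κ, hGQ v κ, ← Matrix.mulVec_sub, ← Matrix.mulVec_sub, ← Matrix.mulVec_sub,
      sub_sub_sub_cancel_left, mul_assoc, mul_assoc]
    refine (norm_mulVec_le _ _).trans (mul_le_mul_of_nonneg_left ?_ hV0)
    refine (norm_diagonal_mulVec_le hmax0 (hH κ) _).trans (mul_le_mul_of_nonneg_left ?_ hmax0)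
    exact norm_mulVec_le _ _
  have hK0 : 0 ≤ matOpNorm V * matOpNorm ((B.map Complex.ofReal * V)⁻¹) * L * hmax := by
    positivity
  have hcontr : ContractingWith ⟨_, hK0⟩ GQ := ⟨hlt, LipschitzWith.of_dist_le_mul hdist⟩
  exact ⟨hdist, hcontr.fixedPoint GQ, hcontr.fixedPoint_isFixedPt,
    fun w hw => hcontr.fixedPoint_unique hw, hcontr.tendsto_iterate_fixedPoint⟩
end
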